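/- Any two injective Lie algebra homomorphisms ε, ε' from the complex simple Lie algebra e₆ to the complex simple Lie algebra e₇ are conjugate by an automorphism of e₇: there exists a Lie algebra automorphism φ of e₇ such that ε' = φ ∘ ε. -/

import Mathlib

/-!
The image of an embedding of `e₆` into `L = e₇` is given by elements `eᵢ`, `fᵢ`, `hᵢ` satisfying the
Serre relations of type `E₆`, and it suffices to extend them to elements satisfying the relations
of type `E₇`: these define an endomorphism of the simple Lie algebra `e₇`, which is bijective.

Root counting gives `78 < dim L ≤ 133`. Weights of `L` under the `hᵢ` are permuted by the Weyl
group, and every dominant weight other than `0`, `ω₁`, `ω₂` (the highest root) and `ω₆` forces too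
many weights. As the Killing form pairs opposite weights, `L` contains at most one copy each of the
27-dimensional representation and its dual; it contains one, for otherwise the subalgebra generated
by the `eᵢ` and `fᵢ` would be an ideal. Vectors `x`, `y` of weights `-ω₆`, `ω₆`, suitably scaled,
are the missing generators, since all brackets that have to vanish have weights which do not occur.
-/

namespace SerreEmbedding

open Module
open LieModule (toEnd toEnd_apply_apply)
open LieAlgebra (ad ad_apply)

section Sl2

variable {K L M : Type*} [Field K] [LieRing L] [LieAlgebra K L] [AddCommGroup M] [Module K M]
  [LieRingModule L M] [LieModule K L M] {e f h : L}

theorem lie_toEnd_pow_succ (t : IsSl2Triple h e f) (n : ℕ) (v : M) :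
    ⁅e, (toEnd K L M f ^ (n + 1)) v⁆ = (toEnd K L M f ^ (n + 1)) ⁅e, v⁆ +
      ((n : K) + 1) • (toEnd K L M f ^ n) (⁅h, v⁆ - (n : K) • v) := by
  induction n generalizing v with
  | zero => simp [leibniz_lie e f v, t.lie_e_f, add_comm]
  | succ n ih =>
    have hhf : ⁅h, ⁅f, v⁆⁆ = ⁅f, ⁅h, v⁆⁆ - (2 : K) • ⁅f, v⁆ := by
      rw [leibniz_lie h, t.lie_lie_smul_f K, neg_lie, smul_lie, add_comm, sub_eq_add_neg]
    rw [pow_succ, End.mul_apply, toEnd_apply_apply, ih, hhf, leibniz_lie e f v, t.lie_e_f]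
    simp only [pow_succ, End.mul_apply, map_add, map_sub, map_smul, toEnd_apply_apply]
    push_cast
    module

theorem lie_mem_maxGenEigenspace {x : L} {c μ : K} (hx : ⁅h, x⁆ = c • x) {v : M}
    (hv : v ∈ (toEnd K L M h).maxGenEigenspace μ) :
    ⁅x, v⁆ ∈ (toEnd K L M h).maxGenEigenspace (c + μ) :=
  LieModule.lie_mem_maxGenEigenspace_toEnd
    (End.eigenspace_le_maxGenEigenspace (End.mem_eigenspace_iff.mpr hx)) hv

theorem disjoint_maxGenEigenspace {T : End K M} {W : Submodule K M} {μ : K}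
    (hW : W ∈ T.invtSubmodule) (hdisj : Disjoint (T.eigenspace μ) W) :
    Disjoint (T.maxGenEigenspace μ) W := by
  rw [Submodule.disjoint_def] at hdisj ⊢
  intro v hv hvW
  obtain ⟨n, hn⟩ := (End.mem_maxGenEigenspace ..).mp hv
  induction n generalizing v with
  | zero => simpa using hn
  | succ n ih =>
    have hTv : (T - μ • 1) v ∈ W := W.sub_mem (hW hvW) (W.smul_mem μ hvW)
    have hn' : ((T - μ • 1) ^ n) ((T - μ • 1) v) = 0 := by
      rwa [← End.mul_apply, ← pow_succ]
    have h0 := ih _ ((End.mem_maxGenEigenspace ..).mpr ⟨n, hn'⟩) hTv hn'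
    exact hdisj v (End.mem_eigenspace_iff.mpr (by simpa [sub_eq_zero] using h0)) hvW

theorem exists_sub_smul_eq_of_mem_maxGenEigenspace {T : End K M} {μ ν : K} (hμν : μ ≠ ν) {v : M}
    (hv : v ∈ T.maxGenEigenspace μ) : ∃ u ∈ T.maxGenEigenspace μ, T u - ν • u = v := by
  obtain ⟨n, hn⟩ := (End.mem_maxGenEigenspace ..).mp hv
  induction n generalizing v with
  | zero => exact ⟨0, zero_mem _, by simpa using hn.symm⟩
  | succ n ih =>
    rw [pow_succ, End.mul_apply] at hn
    obtain ⟨u, hu, hTu⟩ := ih ((End.mem_maxGenEigenspace ..).mpr ⟨n, hn⟩) hn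
    refine ⟨(μ - ν)⁻¹ • (v - u), Submodule.smul_mem _ _ (sub_mem hv hu), ?_⟩
    calc T ((μ - ν)⁻¹ • (v - u)) - ν • (μ - ν)⁻¹ • (v - u)
        = (μ - ν)⁻¹ • ((T v - ν • v) - (T u - ν • u)) := by simp only [map_smul, map_sub]; module
      _ = (μ - ν)⁻¹ • (μ - ν) • v := by rw [hTu]; simp [sub_smul]
      _ = v := inv_smul_smul₀ (sub_ne_zero.mpr hμν) v

theorem sub_smul_mem_iSup_maxGenEigenspace_iff {κ : Type*} (T : End K M) (μ : κ → K) (k : κ)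
    {v : M} : T v - μ k • v ∈ ⨆ j, T.maxGenEigenspace (μ j) ↔
      v ∈ ⨆ j, T.maxGenEigenspace (μ j) := by
  set U := ⨆ j, T.maxGenEigenspace (μ j)
  have hle : U ≤ T.maxGenEigenspace (μ k) ⊔ U.map (T - μ k • 1) := by
    refine iSup_le fun j => ?_
    by_cases hj : μ j = μ k
    · exact hj ▸ le_sup_left
    · refine le_sup_of_le_right fun v hv => ?_
      obtain ⟨u, hu, rfl⟩ := exists_sub_smul_eq_of_mem_maxGenEigenspace hj hv
      exact ⟨u, Submodule.mem_iSup_of_mem j hu, rfl⟩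
  constructor
  · intro hv
    obtain ⟨g, hg, _, ⟨u, hu, rfl⟩, hgu⟩ := Submodule.mem_sup.mp (hle hv)
    have hvu : v - u ∈ T.maxGenEigenspace (μ k) := by
      obtain ⟨n, hn⟩ := (End.mem_maxGenEigenspace ..).mp hg
      refine (End.mem_maxGenEigenspace ..).mpr ⟨n + 1, ?_⟩
      rw [pow_succ, End.mul_apply, map_sub, ← hn]
      exact congrArg _ (sub_eq_of_eq_add hgu.symm)
    exact sub_add_cancel v u ▸ U.add_mem (Submodule.mem_iSup_of_mem k hvu) hu
  · refine fun hv => U.sub_mem ?_ (U.smul_mem _ hv)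
    induction hv using Submodule.iSup_induction' with
    | mem j v hv =>
      exact Submodule.mem_iSup_of_mem j
        (End.mapsTo_maxGenEigenspace_of_comm (Commute.refl T) (μ j) hv)
    | zero => simp
    | add v w _ _ hv hw => rw [map_add]; exact U.add_mem hv hw

variable [CharZero K]

/-- If `f ^ k` kills `v` then it follows from `lie_toEnd_pow_succ` that `f ^ (k + 1)` kills
`⁅e, v⁆`, so one may replace `v` by a vector killed by `e`. -/
theorem eq_zero_of_toEnd_pow_eq_zero (t : IsSl2Triple h e f) {v : M} {m k : ℕ} (hkm : k ≤ m)
    (hv : ⁅h, v⁆ = (m : K) • v) (hf : (toEnd K L M f ^ k) v = 0)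
    (he : ∃ n, (toEnd K L M e ^ n) v = 0) : v = 0 := by
  obtain ⟨n, hn⟩ := he
  induction n generalizing v m k with
  | zero => simpa using hn
  | succ n ih =>
    have hwt : ⁅h, ⁅e, v⁆⁆ = ((m + 2 : ℕ) : K) • ⁅e, v⁆ := by
      rw [leibniz_lie, t.lie_h_e_smul K, hv, smul_lie, lie_smul, ← add_smul]
      push_cast
      ring_nf
    have hfe : (toEnd K L M f ^ (k + 1)) ⁅e, v⁆ = 0 := by
      have := lie_toEnd_pow_succ (K := K) t k v
      simpa [pow_succ', hf, hv] using this.symm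
    have hev : ⁅e, v⁆ = 0 := ih (by omega) hwt hfe (by simpa [pow_succ] using hn)
    by_contra hne
    exact IsSl2Triple.HasPrimitiveVectorWith.pow_toEnd_f_ne_zero_of_eq_nat
      (t := t) ⟨hne, hv, hev⟩ rfl hkm hf

theorem disjoint_maxGenEigenspace_ker_pow (t : IsSl2Triple h e f)
    (he : ∀ v : M, ∃ n, (toEnd K L M e ^ n) v = 0) {m k : ℕ} (hkm : k ≤ m) :
    Disjoint ((toEnd K L M h).maxGenEigenspace m) (LinearMap.ker (toEnd K L M f ^ k)) := by
  refine disjoint_maxGenEigenspace (fun v hv => ?_) ?_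
  · have hcomm : ∀ (k : ℕ) (v : M), (toEnd K L M f ^ k) ⁅h, v⁆ =
        ⁅h, (toEnd K L M f ^ k) v⁆ + (2 * k : K) • (toEnd K L M f ^ k) v := by
      intro k v
      induction k with
      | zero => simp
      | succ k ih =>
        rw [pow_succ', End.mul_apply, End.mul_apply, ih, toEnd_apply_apply,
          toEnd_apply_apply, leibniz_lie h, t.lie_lie_smul_f K]
        simp only [lie_add, lie_smul, neg_lie, smul_lie]
        push_cast
        module
    rw [LinearMap.mem_ker] at hv
    simp [hcomm, hv]
  · refine Submodule.disjoint_def.mpr fun v hv hfv => ?_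
    exact eq_zero_of_toEnd_pow_eq_zero t hkm (End.mem_eigenspace_iff.mp hv) hfv (he v)

attribute [local instance] LieRing.ofAssociativeRing

/-- The powers of `X` are eigenvectors of `ad Z` for infinitely many eigenvalues, unless they
vanish. -/
theorem isNilpotent_of_lie_eq_smul [FiniteDimensional K M] {X Z : End K M} {c : K} (hc : c ≠ 0)
    (hZX : ⁅Z, X⁆ = c • X) : IsNilpotent X := by
  have hpow : ∀ n : ℕ, LieAlgebra.ad K (End K M) Z (X ^ n) = (n * c) • X ^ n := by
    intro n
    simp only [LieAlgebra.ad_apply]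
    induction n with
    | zero => simp [Ring.lie_def]
    | succ n ih =>
      have hleibniz : ⁅Z, X ^ n * X⁆ = ⁅Z, X ^ n⁆ * X + X ^ n * ⁅Z, X⁆ := by
        simp only [Ring.lie_def]
        noncomm_ring
      rw [pow_succ, hleibniz, ih, hZX, smul_mul_assoc, mul_smul_comm, ← add_smul]
      push_cast
      ring_nf
  by_contra hX
  refine Set.infinite_range_of_injective (f := fun n : ℕ => (n * c : K))
    (fun a b hab => by simpa [hc] using hab)
    ((End.finite_hasEigenvalue (LieAlgebra.ad K (End K M) Z)).subset ?_)
  rintro _ ⟨n, rfl⟩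
  exact End.hasEigenvalue_of_hasEigenvector
    ⟨End.mem_eigenspace_iff.mpr (hpow n), fun h0 => hX ⟨n, h0⟩⟩

theorem exists_toEnd_pow_eq_zero [FiniteDimensional K M] (t : IsSl2Triple h e f) (v : M) :
    ∃ n, (toEnd K L M e ^ n) v = 0 := by
  obtain ⟨n, hn⟩ := isNilpotent_of_lie_eq_smul (X := toEnd K L M e) (Z := toEnd K L M h)
    two_ne_zero (by rw [← LieHom.map_lie, t.lie_h_e_smul K, map_smul])
  exact ⟨n, by rw [hn, LinearMap.zero_apply]⟩

theorem mem_of_toEnd_pow_mem (t : IsSl2Triple h e f) {U : Submodule K M}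
    (he : ∀ v ∈ U, ⁅e, v⁆ ∈ U) (hf : ∀ v ∈ U, ⁅f, v⁆ ∈ U)
    (hh : ∀ (n : ℕ) (v : M), ⁅h, v⁆ - (n : K) • v ∈ U ↔ v ∈ U)
    {v : M} (hev : ⁅e, v⁆ ∈ U) {n : ℕ} (hv : (toEnd K L M f ^ n) v ∈ U) : v ∈ U := by
  induction n generalizing v with
  | zero => simpa using hv
  | succ n ih =>
    have hpow : ∀ (k : ℕ) {u : M}, u ∈ U → (toEnd K L M f ^ k) u ∈ U := fun k u hu =>
      End.pow_apply_mem_of_forall_mem k (fun w hw => hf w hw) u hu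
    have hstep : (toEnd K L M f ^ n) (⁅h, v⁆ - (n : K) • v) ∈ U := by
      have := lie_toEnd_pow_succ (K := K) t n v ▸ he _ hv
      exact (U.smul_mem_iff (Nat.cast_add_one_ne_zero n)).mp
        ((U.add_mem_iff_right (hpow _ hev)).mp this)
    refine (hh n v).mp (ih ?_ hstep)
    have hcomm : ⁅e, ⁅h, v⁆⁆ = ⁅h, ⁅e, v⁆⁆ - (2 : K) • ⁅e, v⁆ := by
      rw [leibniz_lie h, t.lie_h_e_smul K, smul_lie, add_sub_cancel_left]
    rw [lie_sub, lie_smul, hcomm, sub_right_comm]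
    exact U.sub_mem ((hh n _).mpr hev) (U.smul_mem _ hev)

theorem iSup_maxGenEigenspace_intCast_eq_top [FiniteDimensional K M] (t : IsSl2Triple h e f) :
    ⨆ m : ℤ, (toEnd K L M h).maxGenEigenspace (m : K) = ⊤ := by
  set U : Submodule K M := ⨆ m : ℤ, (toEnd K L M h).maxGenEigenspace (m : K)
  have hstable : ∀ {x : L} {c : ℤ}, ⁅h, x⁆ = (c : K) • x → ∀ v ∈ U, ⁅x, v⁆ ∈ U := by
    intro x c hx v hv
    induction hv using Submodule.iSup_induction' with
    | mem m v hv =>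
      refine Submodule.mem_iSup_of_mem (c + m) ?_
      rw [Int.cast_add]
      exact lie_mem_maxGenEigenspace hx hv
    | zero => simp
    | add v w _ _ hv hw => rw [lie_add]; exact U.add_mem hv hw
  have he := hstable (x := e) (c := 2) (by simp [t.lie_h_e_smul K])
  have hf := hstable (x := f) (c := -2) (by simp [t.lie_lie_smul_f K])
  have hh : ∀ (n : ℕ) (v : M), ⁅h, v⁆ - (n : K) • v ∈ U ↔ v ∈ U := fun n v => by
    simpa using sub_smul_mem_iSup_maxGenEigenspace_iff (toEnd K L M h) (Int.cast : ℤ → K) n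
  have hpow : ∀ (n : ℕ) (v : M), (toEnd K L M e ^ n) v ∈ U → v ∈ U := by
    intro n
    induction n with
    | zero => exact fun v hv => by simpa using hv
    | succ n ih =>
      intro v hv
      obtain ⟨k, hk⟩ := exists_toEnd_pow_eq_zero (K := K) t.symm v
      have hev : ⁅e, v⁆ ∈ U := ih _ (by rwa [pow_succ] at hv)
      exact mem_of_toEnd_pow_mem t he hf hh hev (hk ▸ U.zero_mem)
  refine Submodule.eq_top_iff'.mpr fun v => ?_
  obtain ⟨n, hn⟩ := exists_toEnd_pow_eq_zero (K := K) t v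
  exact hpow n v (hn ▸ U.zero_mem)

end Sl2

section Presentation

open CartanMatrix

variable {ι K L L' : Type*} [Field K] [LieRing L] [LieAlgebra K L] [LieRing L'] [LieAlgebra K L']

theorem map_ad_pow (φ : L →ₗ⁅K⁆ L') (x y : L) (n : ℕ) :
    φ ((ad K L x ^ n) y) = (ad K L' (φ x) ^ n) (φ y) := by
  induction n with
  | zero => simp
  | succ n ih => simp [pow_succ', ih]

variable (K) in
/-- The families `e`, `f`, `h` satisfy the defining relations of `A.ToLieAlgebra K`. -/
structure SerreRelations (A : Matrix ι ι ℤ) (e f h : ι → L) : Prop where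
  lie_h_h (i j : ι) : ⁅h i, h j⁆ = 0
  lie_e_f (i : ι) : ⁅e i, f i⁆ = h i
  lie_e_f_of_ne {i j : ι} (hij : i ≠ j) : ⁅e i, f j⁆ = 0
  lie_h_e (i j : ι) : ⁅h i, e j⁆ = (A i j : K) • e j
  lie_h_f (i j : ι) : ⁅h i, f j⁆ = -((A i j : K) • f j)
  ad_e_pow (i j : ι) : (ad K L (e i) ^ (-A i j).toNat) ⁅e i, e j⁆ = 0
  ad_f_pow (i j : ι) : (ad K L (f i) ^ (-A i j).toNat) ⁅f i, f j⁆ = 0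

variable (K) in
/-- A nondegenerate solution of the Serre relations: each `e i`, `f i`, `h i` is an
`𝔰𝔩₂`-triple. -/
structure IsSerreFamily (A : Matrix ι ι ℤ) (e f h : ι → L) : Prop
    extends SerreRelations K A e f h where
  diag (i : ι) : A i i = 2
  h_ne_zero (i : ι) : h i ≠ 0

variable (K) in
/-- A Serre family which generates the Lie algebra. -/
structure IsGeneratingSerreFamily (A : Matrix ι ι ℤ) (e f h : ι → L) : Prop
    extends IsSerreFamily K A e f h where
  lieSpan_eq_top : LieSubalgebra.lieSpan K L (Set.range e ∪ Set.range f) = ⊤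

variable {A : Matrix ι ι ℤ} {e f h : ι → L}

theorem IsSerreFamily.isSl2Triple (S : IsSerreFamily K A e f h) (i : ι) :
    IsSl2Triple (h i) (e i) (f i) where
  h_ne_zero := S.h_ne_zero i
  lie_e_f := S.lie_e_f i
  lie_h_e_nsmul := by simp [S.lie_h_e, S.diag, ofNat_smul_eq_nsmul]
  lie_h_f_nsmul := by simp [S.lie_h_f, S.diag, ofNat_smul_eq_nsmul]

theorem IsSerreFamily.swap (S : IsSerreFamily K A e f h) : IsSerreFamily K A f e (-h) where
  lie_h_h i j := by simp [S.lie_h_h]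
  lie_e_f i := by rw [← lie_skew, S.lie_e_f, Pi.neg_apply]
  lie_e_f_of_ne hij := by rw [← lie_skew, S.lie_e_f_of_ne hij.symm, neg_zero]
  lie_h_e i j := by simp [S.lie_h_f]
  lie_h_f i j := by simp [S.lie_h_e]
  ad_e_pow := S.ad_f_pow
  ad_f_pow := S.ad_e_pow
  diag := S.diag
  h_ne_zero i := neg_ne_zero.mpr (S.h_ne_zero i)

theorem IsGeneratingSerreFamily.swap (S : IsGeneratingSerreFamily K A e f h) :
    IsGeneratingSerreFamily K A f e (-h) where
  toIsSerreFamily := S.toIsSerreFamily.swap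
  lieSpan_eq_top := Set.union_comm (Set.range e) _ ▸ S.lieSpan_eq_top

theorem IsSerreFamily.map (S : IsSerreFamily K A e f h) {φ : L →ₗ⁅K⁆ L'}
    (hφ : Function.Injective φ) : IsSerreFamily K A (φ ∘ e) (φ ∘ f) (φ ∘ h) where
  lie_h_h i j := by simp [← LieHom.map_lie, S.lie_h_h]
  lie_e_f i := by simp [← LieHom.map_lie, S.lie_e_f]
  lie_e_f_of_ne hij := by simp [← LieHom.map_lie, S.lie_e_f_of_ne hij]
  lie_h_e i j := by simp [← LieHom.map_lie, S.lie_h_e]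
  lie_h_f i j := by simp [← LieHom.map_lie, S.lie_h_f]
  ad_e_pow i j := by simp [← LieHom.map_lie, ← map_ad_pow, S.ad_e_pow]
  ad_f_pow i j := by simp [← LieHom.map_lie, ← map_ad_pow, S.ad_f_pow]
  diag := S.diag
  h_ne_zero i := (map_ne_zero_iff φ hφ).mpr (S.h_ne_zero i)

theorem hom_ext_of_lieSpan_eq_top (g : LieSubalgebra.lieSpan K L (Set.range e ∪ Set.range f) = ⊤)
    {φ ψ : L →ₗ⁅K⁆ L'} (he : φ ∘ e = ψ ∘ e) (hf : φ ∘ f = ψ ∘ f) : φ = ψ := by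
  ext x
  have hx : x ∈ LieSubalgebra.lieSpan K L (Set.range e ∪ Set.range f) := g ▸ trivial
  induction hx using LieSubalgebra.lieSpan_induction with
  | mem x hx =>
    obtain ⟨i, rfl⟩ | ⟨i, rfl⟩ := hx
    exacts [congrFun he i, congrFun hf i]
  | zero => simp
  | add x y _ _ hx hy => simp [hx, hy]
  | smul c x _ hx => simp [hx]
  | lie x y _ _ hx hy => simp [hx, hy]

/-- The Dynkin diagram of `A` is connected: a nonempty set of nodes that is closed under passing to
neighbours contains all nodes. -/
def IsIndecomposable [Fintype ι] (A : Matrix ι ι ℤ) : Prop :=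
  ∀ s : Finset ι, s.Nonempty → (∀ i ∈ s, ∀ j, A i j ≠ 0 → j ∈ s) → s = .univ

variable [DecidableEq ι]

-- Instance search does not see through `Matrix`.
instance [Fintype ι] (A : Matrix ι ι ℤ) : Decidable (IsIndecomposable A) :=
  have (B : ι → ι → ℤ) : Decidable (∀ s : Finset ι,
      s.Nonempty → (∀ i ∈ s, ∀ j, B i j ≠ 0 → j ∈ s) → s = .univ) := inferInstance
  this A

theorem forall_mem_toSet_map_eq_zero_iff (φ : FreeLieAlgebra K (Generators ι) →ₗ⁅K⁆ L) :
    (∀ x ∈ Relations.toSet K A, φ x = 0) ↔ SerreRelations K A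
      (fun i => φ (.of K (.E i))) (fun i => φ (.of K (.F i))) (fun i => φ (.of K (.H i))) := by
  simp only [Relations.toSet, Set.mem_union, or_imp, forall_and, Set.forall_mem_range,
    Prod.forall, Relations.HH, Relations.EF, Relations.HE, Relations.HF, Relations.adE,
    Relations.adF, Function.uncurry_apply_pair, Function.comp_apply, map_ad_pow, LieHom.map_lie,
    map_sub, map_add, map_smul, sub_eq_zero, add_eq_zero_iff_eq_neg, ← Int.cast_smul_eq_zsmul K]
  constructor
  · rintro ⟨⟨⟨⟨⟨hh, ef⟩, he⟩, hf⟩, ade⟩, adf⟩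
    refine ⟨hh, fun i => ?_, fun {i j} hij => ?_, he, hf, ade, adf⟩
    · simpa [sub_eq_zero] using ef i i
    · simpa [hij] using ef i j
  · intro S
    refine ⟨⟨⟨⟨⟨S.lie_h_h, fun i j => ?_⟩, S.lie_h_e⟩, S.lie_h_f⟩, S.ad_e_pow⟩, S.ad_f_pow⟩
    rcases eq_or_ne i j with rfl | hij
    · simp [S.lie_e_f]
    · simp [hij, S.lie_e_f_of_ne hij]

variable (K A)

/-- The quotient map presenting `A.ToLieAlgebra K`. -/
noncomputable def presentation : FreeLieAlgebra K (Generators ι) →ₗ⁅K⁆ A.ToLieAlgebra K where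
  toLinearMap := (LieSubmodule.Quotient.mk' (Relations.toIdeal K A)).toLinearMap
  map_lie' {x y} := LieSubmodule.Quotient.mk_bracket (Relations.toIdeal K A) x y

theorem presentation_surjective : Function.Surjective (presentation K A) :=
  LieSubmodule.Quotient.surjective_mk' (Relations.toIdeal K A)

theorem presentation_eq_zero_iff (x : FreeLieAlgebra K (Generators ι)) :
    presentation K A x = 0 ↔ x ∈ Relations.toIdeal K A :=
  LieSubmodule.Quotient.mk_eq_zero (Relations.toIdeal K A)

/-- The `i`-th raising generator of `A.ToLieAlgebra K`. -/
noncomputable def genE (i : ι) : A.ToLieAlgebra K := presentation K A (.of K (.E i))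

/-- The `i`-th lowering generator of `A.ToLieAlgebra K`. -/
noncomputable def genF (i : ι) : A.ToLieAlgebra K := presentation K A (.of K (.F i))

/-- The `i`-th Cartan generator of `A.ToLieAlgebra K`. -/
noncomputable def genH (i : ι) : A.ToLieAlgebra K := presentation K A (.of K (.H i))

theorem serreRelations_gen : SerreRelations K A (genE K A) (genF K A) (genH K A) :=
  (forall_mem_toSet_map_eq_zero_iff _).mp fun x hx =>
    (presentation_eq_zero_iff K A x).mpr (LieSubmodule.subset_lieSpan hx)

theorem lieSpan_gen_eq_top :
    LieSubalgebra.lieSpan K (A.ToLieAlgebra K) (Set.range (genE K A) ∪ Set.range (genF K A)) =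
      ⊤ := by
  set S := LieSubalgebra.lieSpan K (A.ToLieAlgebra K)
    (Set.range (genE K A) ∪ Set.range (genF K A))
  have hE (i : ι) : genE K A i ∈ S := LieSubalgebra.subset_lieSpan (.inl ⟨i, rfl⟩)
  have hF (i : ι) : genF K A i ∈ S := LieSubalgebra.subset_lieSpan (.inr ⟨i, rfl⟩)
  have hH (i : ι) : genH K A i ∈ S := (serreRelations_gen K A).lie_e_f i ▸ S.lie_mem (hE i) (hF i)
  let φ : FreeLieAlgebra K (Generators ι) →ₗ⁅K⁆ S := FreeLieAlgebra.lift K fun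
    | .H i => ⟨genH K A i, hH i⟩
    | .E i => ⟨genE K A i, hE i⟩
    | .F i => ⟨genF K A i, hF i⟩
  have hφ : S.incl.comp φ = presentation K A := by
    ext g
    cases g <;> simp [φ] <;> rfl
  refine eq_top_iff.mpr fun x _ => ?_
  obtain ⟨y, rfl⟩ := presentation_surjective K A x
  exact hφ ▸ (φ y).2

variable {K A}

theorem SerreRelations.exists_lift (S : SerreRelations K A e f h) :
    ∃ φ : A.ToLieAlgebra K →ₗ⁅K⁆ L, φ ∘ genE K A = e ∧ φ ∘ genF K A = f := by
  let ψ : FreeLieAlgebra K (Generators ι) →ₗ⁅K⁆ L := FreeLieAlgebra.lift K fun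
    | .H i => h i
    | .E i => e i
    | .F i => f i
  have hψ : Relations.toIdeal K A ≤ ψ.ker :=
    LieSubmodule.lieSpan_le.mpr ((forall_mem_toSet_map_eq_zero_iff ψ).mpr (by simpa [ψ] using S))
  let φ : A.ToLieAlgebra K →ₗ[K] L :=
    (Relations.toIdeal K A).toSubmodule.liftQ ψ.toLinearMap fun x hx => hψ hx
  have hφ (x) : φ (presentation K A x) = ψ x := rfl
  refine ⟨{ φ with map_lie' := fun {x y} => ?_ }, funext fun i => ?_, funext fun i => ?_⟩
  · obtain ⟨x, rfl⟩ := presentation_surjective K A x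
    obtain ⟨y, rfl⟩ := presentation_surjective K A y
    change φ ⁅presentation K A x, presentation K A y⁆ = ⁅φ (presentation K A x), φ _⁆
    rw [← LieHom.map_lie, hφ, hφ, hφ, LieHom.map_lie]
  · exact (hφ _).trans (by simp [ψ])
  · exact (hφ _).trans (by simp [ψ])

theorem isGeneratingSerreFamily_gen [Fintype ι] [CharZero K] [Nontrivial (A.ToLieAlgebra K)]
    (hdiag : ∀ i, A i i = 2) (hA : IsIndecomposable A) :
    IsGeneratingSerreFamily K A (genE K A) (genF K A) (genH K A) where
  toSerreRelations := serreRelations_gen K A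
  diag := hdiag
  lieSpan_eq_top := lieSpan_gen_eq_top K A
  h_ne_zero i hi := by
    classical
    have S := serreRelations_gen K A
    have hzero {i j : ι} (hij : A i j ≠ 0) (hi : genH K A i = 0) :
        genE K A j = 0 ∧ genF K A j = 0 := by
      have he := S.lie_h_e i j
      have hf := S.lie_h_f i j
      rw [hi, zero_lie] at he hf
      have hc : (A i j : K) ≠ 0 := Int.cast_ne_zero.mpr hij
      exact ⟨(smul_eq_zero_iff_right hc).mp he.symm,
        (smul_eq_zero_iff_right hc).mp (neg_eq_zero.mp hf.symm)⟩
    have hH (j : ι) : genH K A j = 0 := by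
      have := hA {j | genH K A j = 0} ⟨i, by simpa⟩ fun i hi j hij => by
        simp [← S.lie_e_f j, (hzero hij (by simpa using hi)).1]
      simpa using this.ge (Finset.mem_univ j)
    have hEF (j : ι) := hzero (show A j j ≠ 0 by simp [hdiag]) (hH j)
    have hid : (LieHom.id : A.ToLieAlgebra K →ₗ⁅K⁆ A.ToLieAlgebra K) = 0 :=
      hom_ext_of_lieSpan_eq_top (lieSpan_gen_eq_top K A)
        (funext fun j => by simp [(hEF j).1]) (funext fun j => by simp [(hEF j).2])
    obtain ⟨x, hx⟩ := exists_ne (0 : A.ToLieAlgebra K)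
    exact hx (LieHom.congr_fun hid x)

end Presentation

section WeightSpaces

variable {ι K L M : Type*} [Field K] [LieRing L] [LieAlgebra K L] [AddCommGroup M] [Module K M]
  [LieRingModule L M] [LieModule K L M] {A : Matrix ι ι ℤ} {e f h : ι → L} {v w : ι → ℤ}

variable (K M) in
/-- The generalised weight space of weight `w`, where a weight is recorded by the integers by which
the `h i` act. -/
noncomputable def wtSpace (h : ι → L) (w : ι → ℤ) : Submodule K M :=
  ⨅ i, (toEnd K L M (h i)).maxGenEigenspace (w i : K)

theorem mem_wtSpace {m : M} :
    m ∈ wtSpace K M h w ↔ ∀ i, m ∈ (toEnd K L M (h i)).maxGenEigenspace (w i : K) :=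
  Submodule.mem_iInf _

theorem mem_wtSpace_of_lie_eq_smul {m : M} (hm : ∀ i, ⁅h i, m⁆ = (w i : K) • m) :
    m ∈ wtSpace K M h w :=
  mem_wtSpace.mpr fun i =>
    End.eigenspace_le_maxGenEigenspace (End.mem_eigenspace_iff.mpr (hm i))

theorem lie_mem_wtSpace {x : L} {m : M} (hx : x ∈ wtSpace K L h v) (hm : m ∈ wtSpace K M h w) :
    ⁅x, m⁆ ∈ wtSpace K M h (v + w) :=
  mem_wtSpace.mpr fun i => by
    rw [Pi.add_apply, Int.cast_add]
    exact LieModule.lie_mem_maxGenEigenspace_toEnd (mem_wtSpace.mp hx i) (mem_wtSpace.mp hm i)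

theorem toEnd_pow_mem_wtSpace {x : L} {m : M} (hx : x ∈ wtSpace K L h v)
    (hm : m ∈ wtSpace K M h w) (n : ℕ) : (toEnd K L M x ^ n) m ∈ wtSpace K M h (w + n • v) := by
  induction n with
  | zero => simpa using hm
  | succ n ih =>
    rw [pow_succ', End.mul_apply, succ_nsmul', add_left_comm]
    exact lie_mem_wtSpace hx ih

theorem wtSpace_neg_neg : wtSpace K M (-h) (-w) = wtSpace K M h w := by
  ext m
  refine (mem_wtSpace.trans (forall_congr' fun i => ?_)).trans mem_wtSpace.symm
  have hneg : toEnd K L M ((-h) i) - ((-w) i : K) • 1 = -(toEnd K L M (h i) - (w i : K) • 1) := by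
    rw [Pi.neg_apply, Pi.neg_apply, map_neg]
    push_cast
    module
  have hpow (T : End K M) (n : ℕ) : ((-T) ^ n) m = 0 ↔ (T ^ n) m = 0 := by
    rw [← neg_one_smul K T, smul_pow, LinearMap.smul_apply,
      smul_eq_zero_iff_right (pow_ne_zero n (neg_ne_zero.mpr one_ne_zero))]
  simp only [End.mem_maxGenEigenspace, hneg, hpow]

theorem coe_mem_wtSpace_iff (I : LieIdeal K L) (x : I) :
    (x : L) ∈ wtSpace K L h w ↔ x ∈ wtSpace K I h w := by
  have hpow (i : ι) (n : ℕ) : (((toEnd K L I (h i) - (w i : K) • 1) ^ n) x : I) =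
      ((toEnd K L L (h i) - (w i : K) • 1) ^ n) (x : L) := by
    induction n with
    | zero => simp
    | succ n ih => simp [pow_succ', ← ih]
  simp only [mem_wtSpace, End.mem_maxGenEigenspace, ← hpow, ZeroMemClass.coe_eq_zero]

theorem e_mem_wtSpace (S : SerreRelations K A e f h) (j : ι) :
    e j ∈ wtSpace K L h (A.col j) :=
  mem_wtSpace_of_lie_eq_smul fun i => S.lie_h_e i j

theorem f_mem_wtSpace (S : SerreRelations K A e f h) (j : ι) :
    f j ∈ wtSpace K L h (-A.col j) :=
  mem_wtSpace_of_lie_eq_smul fun i => by simp [S.lie_h_f]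

theorem h_mem_wtSpace (S : SerreRelations K A e f h) (j : ι) :
    h j ∈ wtSpace K L h 0 :=
  mem_wtSpace_of_lie_eq_smul fun i => by simp [S.lie_h_h]

theorem commute_toEnd_h (S : SerreRelations K A e f h) (i j : ι) :
    Commute (toEnd K L M (h i)) (toEnd K L M (h j)) := by
  ext m
  simp [leibniz_lie (h i), S.lie_h_h]

theorem exists_lie_eq_smul_of_finrank_eq_one (hw : finrank K (wtSpace K M h w) = 1) {z : L}
    (hz : z ∈ wtSpace K L h 0) {m : M} (hm : m ∈ wtSpace K M h w) : ∃ c : K, ⁅z, m⁆ = c • m := by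
  rcases eq_or_ne m 0 with rfl | hm0
  · exact ⟨0, by simp⟩
  · have hzm : ⁅z, m⁆ ∈ wtSpace K M h w := zero_add w ▸ lie_mem_wtSpace hz hm
    obtain ⟨c, hc⟩ := exists_smul_eq_of_finrank_eq_one hw (x := ⟨m, hm⟩)
      (Subtype.coe_ne_coe.mp hm0) ⟨_, hzm⟩
    exact ⟨c, (congrArg Subtype.val hc).symm⟩

theorem lie_h_eq_smul_of_finrank_eq_one (S : SerreRelations K A e f h)
    (hw : finrank K (wtSpace K M h w) = 1) {m : M} (hm : m ∈ wtSpace K M h w) (i : ι) :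
    ⁅h i, m⁆ = (w i : K) • m := by
  obtain ⟨c, hc⟩ := exists_lie_eq_smul_of_finrank_eq_one hw (h_mem_wtSpace S i) hm
  rcases eq_or_ne c (w i) with rfl | hne
  · exact hc
  · have hdisj : Disjoint ((toEnd K L M (h i)).genEigenspace c ⊤)
        ((toEnd K L M (h i)).maxGenEigenspace (w i)) := End.disjoint_genEigenspace _ hne _ _
    have hm0 : m = 0 := Submodule.disjoint_def.mp hdisj m
      (End.eigenspace_le_maxGenEigenspace (End.mem_eigenspace_iff.mpr hc)) (mem_wtSpace.mp hm i)
    simp [hm0]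

theorem lie_lie_h_eq_zero_of_finrank_eq_one (S : SerreRelations K A e f h)
    (hw : finrank K (wtSpace K L h w) = 1) (hw' : finrank K (wtSpace K L h (-w)) = 1) {x y : L}
    (hx : x ∈ wtSpace K L h w) (hy : y ∈ wtSpace K L h (-w)) (i : ι) : ⁅⁅x, y⁆, h i⁆ = 0 := by
  rw [← lie_skew, leibniz_lie, lie_h_eq_smul_of_finrank_eq_one S hw hx,
    lie_h_eq_smul_of_finrank_eq_one S hw' hy]
  simp

variable [CharZero K]

theorem iSupIndep_wtSpace (S : SerreRelations K A e f h) : iSupIndep (wtSpace K M h) :=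
  (End.independent_iInf_maxGenEigenspace_of_forall_mapsTo (fun i => toEnd K L M (h i)) fun i j =>
    End.mapsTo_maxGenEigenspace_of_comm (commute_toEnd_h S j i)).comp
      fun _ _ hvw => funext fun i => Int.cast_injective (congrFun hvw i)

theorem iSup_wtSpace_eq_top [FiniteDimensional K M] (S : IsSerreFamily K A e f h) :
    ⨆ w, wtSpace K M h w = ⊤ := by
  have hint (i : ι) : ⨆ m : ℤ, (toEnd K L M (h i)).maxGenEigenspace (m : K) = ⊤ :=
    iSup_maxGenEigenspace_intCast_eq_top (S.isSl2Triple i)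
  have htop : ⨆ χ : ι → K, ⨅ i, (toEnd K L M (h i)).maxGenEigenspace (χ i) = ⊤ :=
    End.iSup_iInf_maxGenEigenspace_eq_top_of_iSup_maxGenEigenspace_eq_top_of_commute _
      (fun i j _ => commute_toEnd_h S.toSerreRelations i j)
      fun i => eq_top_mono (iSup_comp_le _ (Int.cast : ℤ → K)) (hint i)
  rw [eq_top_iff, ← htop]
  refine iSup_le fun χ => ?_
  by_cases hχ : ∃ w : ι → ℤ, (fun i => (w i : K)) = χ
  · obtain ⟨w, rfl⟩ := hχ
    exact le_iSup (wtSpace K M h) w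
  · obtain ⟨i, hi⟩ : ∃ i, ∀ m : ℤ, (m : K) ≠ χ i := by
      contrapose! hχ
      choose w hw using hχ
      exact ⟨w, funext hw⟩
    have hdisj := (toEnd K L M (h i)).independent_maxGenEigenspace (χ i)
    have hle : ⨆ m : ℤ, (toEnd K L M (h i)).maxGenEigenspace (m : K) ≤
        ⨆ (μ) (_ : μ ≠ χ i), (toEnd K L M (h i)).maxGenEigenspace μ :=
      iSup_le fun m => le_iSup₂_of_le _ (hi m) le_rfl
    rw [hint] at hle
    have hbot := disjoint_top.mp (hdisj.mono_right hle)
    exact (iInf_le _ i).trans (hbot.le.trans bot_le)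

theorem exists_wtSpace_ne_bot [FiniteDimensional K M] [Nontrivial M]
    (S : IsSerreFamily K A e f h) : ∃ w, wtSpace K M h w ≠ ⊥ := by
  by_contra! hbot
  simpa [hbot] using iSup_wtSpace_eq_top (M := M) S

end WeightSpaces

section Reflections

variable {ι K L M : Type*} [Field K] [LieRing L] [LieAlgebra K L] [AddCommGroup M] [Module K M]
  [LieRingModule L M] [LieModule K L M] {A : Matrix ι ι ℤ} {e f h : ι → L} {w : ι → ℤ}

/-- The simple reflection `w ↦ w - ⟨w, hᵢ⟩ αᵢ` on integral weights, where the coordinates of `αᵢ`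
are the `i`-th column of the Cartan matrix. -/
def reflect (A : Matrix ι ι ℤ) (i : ι) (w : ι → ℤ) : ι → ℤ := w - w i • A.col i

theorem reflect_apply (i j : ι) : reflect A i w j = w j - w i * A j i := by
  simp [reflect]

theorem reflect_neg (i : ι) : reflect A i (-w) = -reflect A i w := by
  simp [reflect, add_comm, sub_eq_add_neg]

theorem reflect_reflect {i : ι} (hA : A i i = 2) : reflect A i (reflect A i w) = w := by
  ext j
  simp only [reflect_apply, hA]
  ring

variable (K M) in
/-- `M` is an integrable module: all `e i` and `f i` act locally nilpotently. -/
structure IsIntegrable (e f : ι → L) : Prop where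
  exists_pow_e (i : ι) (m : M) : ∃ n, (toEnd K L M (e i) ^ n) m = 0
  exists_pow_f (i : ι) (m : M) : ∃ n, (toEnd K L M (f i) ^ n) m = 0

theorem IsGeneratingSerreFamily.isIntegrable (S : IsGeneratingSerreFamily K A e f h) :
    IsIntegrable K L e f := by
  have key {e f h : ι → L} (S : IsGeneratingSerreFamily K A e f h) (i : ι) (x : L) :
      ∃ n, (toEnd K L L (e i) ^ n) x = 0 := by
    suffices LieSubalgebra.lieSpan K L (Set.range e ∪ Set.range f) ≤
        LieSubalgebra.engel K (e i) by
      exact (LieSubalgebra.mem_engel_iff ..).mp (this (S.lieSpan_eq_top ▸ trivial))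
    refine LieSubalgebra.lieSpan_le.mpr ?_
    rintro _ (⟨j, rfl⟩ | ⟨j, rfl⟩) <;> refine (LieSubalgebra.mem_engel_iff ..).mpr ?_
    · exact ⟨(-A i j).toNat + 1, by rw [pow_succ, End.mul_apply]; exact S.ad_e_pow i j⟩
    · rcases eq_or_ne i j with rfl | hij
      · have hhe : ⁅e i, h i⁆ = -((2 : K) • e i) := by
          rw [← lie_skew, (S.isSl2Triple i).lie_h_e_smul K]
        exact ⟨3, by simp [pow_succ, S.lie_e_f, hhe]⟩
      · exact ⟨1, by simpa using S.lie_e_f_of_ne hij⟩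
  exact ⟨key S, key S.swap⟩

variable [CharZero K]

theorem isIntegrable_of_finiteDimensional [FiniteDimensional K M] (S : IsSerreFamily K A e f h) :
    IsIntegrable K M e f where
  exists_pow_e i := exists_toEnd_pow_eq_zero (S.isSl2Triple i)
  exists_pow_f i := exists_toEnd_pow_eq_zero (S.isSl2Triple i).symm

theorem disjoint_wtSpace_ker_f_pow (S : IsSerreFamily K A e f h) (hM : IsIntegrable K M e f)
    (i : ι) {k : ℕ} (hk : (k : ℤ) ≤ w i) :
    Disjoint (wtSpace K M h w) (LinearMap.ker (toEnd K L M (f i) ^ k)) := by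
  have hle : wtSpace K M h w ≤ (toEnd K L M (h i)).maxGenEigenspace ((w i).toNat : K) := by
    have hw : (((w i).toNat : ℤ) : K) = w i := by rw [Int.toNat_of_nonneg (by omega)]
    rw [← Int.cast_natCast, hw]
    exact iInf_le _ i
  exact (disjoint_maxGenEigenspace_ker_pow (S.isSl2Triple i) (hM.exists_pow_e i)
    (by omega)).mono_left hle

theorem exists_pow_mapsTo_reflect (S : IsSerreFamily K A e f h) (hM : IsIntegrable K M e f)
    (w : ι → ℤ) (i : ι) : ∃ x ∈ ({e i, f i} : Set L), ∃ n : ℕ,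
      Set.MapsTo (toEnd K L M x ^ n) (wtSpace K M h w) (wtSpace K M h (reflect A i w)) ∧
      Disjoint (wtSpace K M h w) (LinearMap.ker (toEnd K L M x ^ n)) := by
  have key {e f h : ι → L} (S : IsSerreFamily K A e f h) (hM : IsIntegrable K M e f) {w : ι → ℤ}
      (hw : 0 ≤ w i) : ∃ n : ℕ, Set.MapsTo (toEnd K L M (f i) ^ n) (wtSpace K M h w)
        (wtSpace K M h (reflect A i w)) ∧
      Disjoint (wtSpace K M h w) (LinearMap.ker (toEnd K L M (f i) ^ n)) := by
    refine ⟨(w i).toNat, fun m hm => ?_, disjoint_wtSpace_ker_f_pow S hM i (by omega)⟩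
    have hrefl : reflect A i w = w + (w i).toNat • -A.col i := by
      rw [reflect, smul_neg, ← sub_eq_add_neg, ← natCast_zsmul, Int.toNat_of_nonneg hw]
    exact hrefl ▸ toEnd_pow_mem_wtSpace (f_mem_wtSpace S.toSerreRelations i) hm _
  rcases le_total 0 (w i) with hw | hw
  · exact ⟨f i, by simp, key S hM hw⟩
  · have := key S.swap ⟨hM.exists_pow_f, hM.exists_pow_e⟩ (w := -w) (by simpa using hw)
    rw [reflect_neg, wtSpace_neg_neg, wtSpace_neg_neg] at this
    exact ⟨e i, by simp, this⟩

theorem exists_injective_wtSpace_reflect (S : IsSerreFamily K A e f h) (hM : IsIntegrable K M e f)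
    (w : ι → ℤ) (i : ι) :
    ∃ T : wtSpace K M h w →ₗ[K] wtSpace K M h (reflect A i w), Function.Injective T := by
  obtain ⟨x, -, n, hmaps, hdisj⟩ := exists_pow_mapsTo_reflect S hM w i
  exact ⟨_, (LinearMap.injective_restrict_iff hmaps).mpr hdisj⟩

theorem wtSpace_reflect_ne_bot (S : IsSerreFamily K A e f h) (hM : IsIntegrable K M e f) (i : ι)
    (hw : wtSpace K M h w ≠ ⊥) : wtSpace K M h (reflect A i w) ≠ ⊥ := by
  obtain ⟨T, hT⟩ := exists_injective_wtSpace_reflect S hM w i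
  rw [← Submodule.nontrivial_iff_ne_bot] at hw ⊢
  exact hT.nontrivial

end Reflections

theorem eq_of_le_of_iSupIndep {α κ : Type*} [CompleteLattice α] [IsModularLattice α]
    {V G : κ → α} (hle : V ≤ G) (hG : iSupIndep G) (htop : ⨆ k, V k = ⊤) (k : κ) :
    V k = G k := by
  have hsup : V k ⊔ ⨆ (j) (_ : j ≠ k), V j = ⊤ := by
    rw [← htop, iSup_split_single V k]
  have hcodisj : Codisjoint (V k) (⨆ (j) (_ : j ≠ k), G j) :=
    codisjoint_iff_le_sup.mpr (hsup.ge.trans (sup_le_sup_left (iSup₂_mono fun j _ => hle j) _))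
  exact (le_iff_eq_of_codisjoint_of_disjoint hcodisj (hG k).symm).mp (hle k)

theorem span_range_neg {ι R M : Type*} [Ring R] [AddCommGroup M] [Module R M] (v : ι → M) :
    Submodule.span R (Set.range (-v)) = Submodule.span R (Set.range v) := by
  rw [← Submodule.span_neg (Set.range v), Set.neg_range]
  rfl

theorem eq_top_of_lieSpan_eq_top {R L : Type*} [CommRing R] [LieRing L] [LieAlgebra R L] {s : Set L}
    (hs : LieSubalgebra.lieSpan R L s = ⊤) {T : Submodule R L} (hsT : s ⊆ T)
    (hT : ∀ x ∈ s, ∀ m ∈ T, ⁅x, m⁆ ∈ T) : T = ⊤ := by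
  have hmem (x : L) : x ∈ T ∧ ∀ m ∈ T, ⁅x, m⁆ ∈ T := by
    have hx : x ∈ LieSubalgebra.lieSpan R L s := hs ▸ trivial
    induction hx using LieSubalgebra.lieSpan_induction with
    | mem x hx => exact ⟨hsT hx, hT x hx⟩
    | zero => simp
    | add x y _ _ hx hy =>
      exact ⟨add_mem hx.1 hy.1, fun m hm => add_lie x y m ▸ add_mem (hx.2 m hm) (hy.2 m hm)⟩
    | smul c x _ hx =>
      exact ⟨T.smul_mem c hx.1, fun m hm => smul_lie c x m ▸ T.smul_mem c (hx.2 m hm)⟩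
    | lie x y _ _ hx hy =>
      exact ⟨hx.2 y hy.1, fun m hm =>
        lie_lie x y m ▸ sub_mem (hx.2 _ (hy.2 m hm)) (hy.2 _ (hx.2 m hm))⟩
  exact eq_top_iff.mpr fun x _ => (hmem x).1

section TriangularDecomposition

open Submodule (span subset_span span_le)
open Matrix

variable {ι K L : Type*} [DecidableEq ι] [Field K] [LieRing L] [LieAlgebra K L]
  {A : Matrix ι ι ℤ} {e f h : ι → L} {k : ι → ℤ} {x : L}

/-- `IteratedBracket e k x` says that `x` is an iterated bracket `⁅e i₁, ⁅e i₂, …⁆⁆` in which each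
`e i` occurs `k i` times; these elements span the nilradical of a Borel subalgebra. -/
inductive IteratedBracket (e : ι → L) : (ι → ℤ) → L → Prop
  | base (i : ι) : IteratedBracket e (Pi.single i 1) (e i)
  | step (i : ι) {k : ι → ℤ} {x : L} (hx : IteratedBracket e k x) :
      IteratedBracket e (Pi.single i 1 + k) ⁅e i, x⁆

namespace IteratedBracket

theorem degree_nonneg (hx : IteratedBracket e k x) : 0 ≤ k := by
  induction hx with
  | base i => exact Pi.single_nonneg.mpr zero_le_one
  | step i _ ih => exact add_nonneg (Pi.single_nonneg.mpr zero_le_one) ih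

theorem degree_ne_zero (hx : IteratedBracket e k x) : k ≠ 0 := by
  rintro rfl
  generalize hk : (0 : ι → ℤ) = k at hx
  cases hx with
  | base i => simpa using congrFun hk i
  | step i hx =>
    have h₁ := congrFun hk i
    have h₂ := hx.degree_nonneg i
    simp only [Pi.zero_apply, Pi.add_apply, Pi.single_eq_same] at h₁ h₂
    omega

theorem eq_of_forall_ne (hx : IteratedBracket e k x) {i : ι} (hk : ∀ j, j ≠ i → k j = 0) :
    (k = Pi.single i 1 ∧ x = e i) ∨ x = 0 := by
  induction hx with
  | base j =>
    obtain rfl : j = i := by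
      by_contra hj
      simpa using hk j hj
    exact .inl ⟨rfl, rfl⟩
  | @step j k x hx ih =>
    obtain rfl : j = i := by
      by_contra hj
      have h₁ : 1 + k j = 0 := by simpa using hk j hj
      have h₂ := hx.degree_nonneg j
      simp only [Pi.zero_apply] at h₂
      omega
    obtain ⟨-, rfl⟩ | rfl := ih fun l hl => by simpa [hl] using hk l hl
    all_goals simp

theorem lie_h [Fintype ι] (S : SerreRelations K A e f h) (hx : IteratedBracket e k x) (i : ι) :
    ⁅h i, x⁆ = ((A *ᵥ k) i : K) • x := by
  induction hx with
  | base j => simp [S.lie_h_e]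
  | step j _ ih => simp [leibniz_lie (h i), S.lie_h_e, ih, mulVec_add, add_smul]

end IteratedBracket

variable (K) in
/-- The span of the iterated brackets of the `e i`. -/
def bracketSpan (e : ι → L) : Submodule K L := span K {x | ∃ k, IteratedBracket e k x}

theorem mem_bracketSpan (i : ι) : e i ∈ bracketSpan K e := subset_span ⟨_, .base i⟩

theorem lie_e_mem_bracketSpan (S : SerreRelations K A e f h) (i : ι)
    (hx : x ∈ bracketSpan K e ⊔ span K (Set.range h)) : ⁅e i, x⁆ ∈ bracketSpan K e := by
  suffices bracketSpan K e ⊔ span K (Set.range h) ≤ (bracketSpan K e).comap (ad K L (e i)) from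
    this hx
  refine sup_le (span_le.mpr ?_) (span_le.mpr ?_)
  · rintro x ⟨k, hx⟩
    exact subset_span ⟨_, hx.step i⟩
  · rintro _ ⟨j, rfl⟩
    change ⁅e i, h j⁆ ∈ bracketSpan K e
    rw [← lie_skew, S.lie_h_e]
    exact neg_mem (Submodule.smul_mem _ _ (mem_bracketSpan i))

theorem lie_f_mem_bracketSpan_sup [Finite ι] (S : SerreRelations K A e f h) (i : ι)
    (hx : x ∈ bracketSpan K e) : ⁅f i, x⁆ ∈ bracketSpan K e ⊔ span K (Set.range h) := by
  have := Fintype.ofFinite ι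
  have hfe (j : ι) : ⁅f i, e j⁆ = if i = j then -h i else 0 := by
    rw [← lie_skew]
    split_ifs with hij
    · rw [hij, S.lie_e_f]
    · rw [S.lie_e_f_of_ne (Ne.symm hij), neg_zero]
  suffices bracketSpan K e ≤ (bracketSpan K e ⊔ span K (Set.range h)).comap (ad K L (f i)) from
    this hx
  refine span_le.mpr ?_
  rintro x ⟨k, hx⟩
  change ⁅f i, x⁆ ∈ bracketSpan K e ⊔ span K (Set.range h)
  induction hx with
  | base j =>
    rw [hfe]
    split_ifs
    · exact Submodule.mem_sup_right (neg_mem (subset_span ⟨i, rfl⟩))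
    · exact zero_mem _
  | step j hx ih =>
    rw [leibniz_lie, hfe]
    refine add_mem (Submodule.mem_sup_left ?_)
      (Submodule.mem_sup_left (lie_e_mem_bracketSpan S j ih))
    split_ifs
    · rw [neg_lie, hx.lie_h S]
      exact neg_mem (Submodule.smul_mem _ _ (subset_span ⟨_, hx⟩))
    · simp

theorem lie_e_mem_triangular [Finite ι] (S : IsGeneratingSerreFamily K A e f h) (i : ι)
    (hx : x ∈ bracketSpan K e ⊔ bracketSpan K f ⊔ span K (Set.range h)) :
    ⁅e i, x⁆ ∈ bracketSpan K e ⊔ bracketSpan K f ⊔ span K (Set.range h) := by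
  obtain ⟨y, hy, c, hc, rfl⟩ := Submodule.mem_sup.mp hx
  obtain ⟨a, ha, b, hb, rfl⟩ := Submodule.mem_sup.mp hy
  have hb' := lie_f_mem_bracketSpan_sup S.swap.toSerreRelations i hb
  rw [span_range_neg] at hb'
  rw [lie_add, lie_add, add_right_comm, ← lie_add]
  exact add_mem (Submodule.mem_sup_left (Submodule.mem_sup_left
      (lie_e_mem_bracketSpan S.toSerreRelations i (Submodule.add_mem_sup ha hc))))
    (sup_le_sup_right (le_sup_right (a := bracketSpan K e)) _ hb')

theorem bracketSpan_sup_bracketSpan_sup_eq_top [Finite ι]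
    (S : IsGeneratingSerreFamily K A e f h) :
    bracketSpan K e ⊔ bracketSpan K f ⊔ span K (Set.range h) = ⊤ := by
  refine eq_top_of_lieSpan_eq_top S.lieSpan_eq_top (Set.union_subset ?_ ?_) ?_
  · rintro _ ⟨i, rfl⟩
    exact Submodule.mem_sup_left (Submodule.mem_sup_left (mem_bracketSpan i))
  · rintro _ ⟨i, rfl⟩
    exact Submodule.mem_sup_left (Submodule.mem_sup_right (mem_bracketSpan i))
  · rintro _ (⟨i, rfl⟩ | ⟨i, rfl⟩) x hx
    · exact lie_e_mem_triangular S i hx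
    · have := @lie_e_mem_triangular _ _ _ _ _ _ _ A f e (-h) x _ S.swap i
      rw [span_range_neg, sup_comm (bracketSpan K f)] at this
      exact this hx

/-- The generators of the part of multidegree `k` in the triangular decomposition. -/
def degGenerators (e f h : ι → L) (k : ι → ℤ) : Set L :=
  {x | IteratedBracket e k x ∨ IteratedBracket f (-k) x ∨ (k = 0 ∧ x ∈ Set.range h)}

theorem eq_of_mem_degGenerators {i : ι} (hk : ∀ j, j ≠ i → k j = 0) (hi : 0 < k i)
    (hx : x ∈ degGenerators e f h k) :
    (k = Pi.single i 1 ∧ x = e i) ∨ x = 0 := by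
  obtain hx | hx | ⟨rfl, -⟩ := hx
  · exact hx.eq_of_forall_ne hk
  · have := hx.degree_nonneg i
    simp only [Pi.zero_apply, Pi.neg_apply] at this
    omega
  · simp at hi

theorem iSup_span_degGenerators_eq_top [Finite ι] (S : IsGeneratingSerreFamily K A e f h) :
    ⨆ k, span K (degGenerators e f h k) = ⊤ := by
  rw [eq_top_iff, ← bracketSpan_sup_bracketSpan_sup_eq_top S]
  refine sup_le (sup_le (span_le.mpr ?_) (span_le.mpr ?_)) (span_le.mpr fun x hx => ?_)
  · rintro x ⟨k, hx⟩
    exact Submodule.mem_iSup_of_mem k (subset_span (.inl hx))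
  · rintro x ⟨k, hx⟩
    exact Submodule.mem_iSup_of_mem (-k) (subset_span (.inr (.inl (by rwa [neg_neg]))))
  · exact Submodule.mem_iSup_of_mem 0 (subset_span (.inr (.inr ⟨rfl, hx⟩)))

theorem span_degGenerators_le_wtSpace [Fintype ι] (S : IsSerreFamily K A e f h) (k : ι → ℤ) :
    span K (degGenerators e f h k) ≤ wtSpace K L h (A *ᵥ k) := by
  refine span_le.mpr ?_
  rintro x (hx | hx | ⟨rfl, i, rfl⟩)
  · exact mem_wtSpace_of_lie_eq_smul (hx.lie_h S.toSerreRelations)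
  · rw [← wtSpace_neg_neg, ← mulVec_neg]
    exact mem_wtSpace_of_lie_eq_smul (hx.lie_h S.swap.toSerreRelations)
  · rw [mulVec_zero]
    exact h_mem_wtSpace S.toSerreRelations i

theorem span_degGenerators_eq_wtSpace [Fintype ι] [CharZero K]
    (S : IsGeneratingSerreFamily K A e f h) (hA : Function.Injective A.mulVec) (k : ι → ℤ) :
    span K (degGenerators e f h k) = wtSpace K L h (A *ᵥ k) :=
  eq_of_le_of_iSupIndep (G := fun k => wtSpace K L h (A *ᵥ k))
    (span_degGenerators_le_wtSpace S.toIsSerreFamily)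
    ((iSupIndep_wtSpace S.toSerreRelations).comp hA) (iSup_span_degGenerators_eq_top S) k

end TriangularDecomposition

section RootLattice

open Submodule (span subset_span span_le)
open Matrix

variable {ι K L : Type*} [Fintype ι] [Field K] [CharZero K] [LieRing L] [LieAlgebra K L]
  {A : Matrix ι ι ℤ} {e f h : ι → L} {k : ι → ℤ}

theorem exists_mulVec_eq_of_wtSpace_ne_bot (S : IsGeneratingSerreFamily K A e f h) {w : ι → ℤ}
    (hw : wtSpace K L h w ≠ ⊥) : ∃ k, A *ᵥ k = w := by
  classical
  by_contra! hne
  have hle : ⨆ k, span K (degGenerators e f h k) ≤ ⨆ (v) (_ : v ≠ w), wtSpace K L h v :=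
    iSup_le fun k =>
      (span_degGenerators_le_wtSpace S.toIsSerreFamily k).trans (le_iSup₂_of_le _ (hne k) le_rfl)
  rw [iSup_span_degGenerators_eq_top S] at hle
  exact hw (disjoint_top.mp ((iSupIndep_wtSpace S.toSerreRelations w).mono_right hle))

theorem wtSpace_zero_eq_span (S : IsGeneratingSerreFamily K A e f h)
    (hA : Function.Injective A.mulVec) : wtSpace K L h 0 = span K (Set.range h) := by
  classical
  rw [← mulVec_zero A, ← span_degGenerators_eq_wtSpace S hA]
  refine le_antisymm (span_le.mpr ?_) (Submodule.span_mono fun x hx => .inr (.inr ⟨rfl, hx⟩))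
  rintro x (hx | hx | ⟨-, hx⟩)
  · exact absurd rfl hx.degree_ne_zero
  · exact absurd neg_zero hx.degree_ne_zero
  · exact subset_span hx

theorem nonneg_or_nonpos_of_wtSpace_ne_bot (S : IsGeneratingSerreFamily K A e f h)
    (hA : Function.Injective A.mulVec) (hk : wtSpace K L h (A *ᵥ k) ≠ ⊥) : 0 ≤ k ∨ k ≤ 0 := by
  classical
  by_contra! hc
  rw [← span_degGenerators_eq_wtSpace S hA] at hk
  refine hk (Submodule.span_eq_bot.mpr ?_)
  rintro x (hx | hx | ⟨rfl, -⟩)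
  · exact absurd hx.degree_nonneg hc.1
  · exact absurd (neg_nonneg.mp hx.degree_nonneg) hc.2
  · exact absurd le_rfl hc.1

theorem wtSpace_le_span_e (S : IsGeneratingSerreFamily K A e f h)
    (hA : Function.Injective A.mulVec) {i : ι} (hk : ∀ j, j ≠ i → k j = 0) (hi : 0 < k i) :
    wtSpace K L h (A *ᵥ k) ≤ K ∙ e i := by
  classical
  rw [← span_degGenerators_eq_wtSpace S hA]
  refine span_le.mpr fun x hx => ?_
  obtain ⟨-, rfl⟩ | rfl := eq_of_mem_degGenerators hk hi hx
  exacts [Submodule.mem_span_singleton_self _, zero_mem _]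

theorem eq_single_of_wtSpace_ne_bot [DecidableEq ι] (S : IsGeneratingSerreFamily K A e f h)
    (hA : Function.Injective A.mulVec) {i : ι} (hk : ∀ j, j ≠ i → k j = 0) (hi : 0 < k i)
    (hne : wtSpace K L h (A *ᵥ k) ≠ ⊥) : k = Pi.single i 1 := by
  rw [← span_degGenerators_eq_wtSpace S hA] at hne
  by_contra hk1
  exact hne (Submodule.span_eq_bot.mpr fun x hx =>
    (eq_of_mem_degGenerators hk hi hx).resolve_left fun h => hk1 h.1)

end RootLattice

section RootBounds

variable {ι : Type*} {A : Matrix ι ι ℤ} {R : Finset (ι → ℤ)} {w : ι → ℤ}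

/-- `R` is a finite set of weights which contains all roots, because it contains the simple roots
and is stable under negation and under the simple reflections. For computations, the latter is only
required of the reflections that lower a weight, which suffices by symmetry. -/
structure IsRootBound (A : Matrix ι ι ℤ) (R : Finset (ι → ℤ)) : Prop where
  col_mem (i : ι) : A.col i ∈ R
  neg_mem (w : ι → ℤ) (hw : w ∈ R) : -w ∈ R
  reflect_mem_of_pos (w : ι → ℤ) (hw : w ∈ R) (i : ι) (hi : 0 < w i) : reflect A i w ∈ R

instance [Fintype ι] (A : Matrix ι ι ℤ) (R : Finset (ι → ℤ)) : Decidable (IsRootBound A R) :=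
  decidable_of_iff ((∀ i, A.col i ∈ R) ∧ (∀ w ∈ R, -w ∈ R) ∧
      ∀ w ∈ R, ∀ i, 0 < w i → reflect A i w ∈ R)
    ⟨fun ⟨hcol, hneg, hrefl⟩ => ⟨hcol, hneg, hrefl⟩,
      fun hR => ⟨hR.col_mem, hR.neg_mem, hR.reflect_mem_of_pos⟩⟩

theorem IsRootBound.reflect_mem (hR : IsRootBound A R) (hw : w ∈ R) (i : ι) :
    reflect A i w ∈ R := by
  obtain hi | hi | hi := lt_trichotomy (w i) 0
  · rw [← neg_neg w, reflect_neg]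
    exact hR.neg_mem _ (hR.reflect_mem_of_pos _ (hR.neg_mem w hw) i (by simpa using hi))
  · simpa [reflect, hi] using hw
  · exact hR.reflect_mem_of_pos w hw i hi

end RootBounds

section Roots

open Submodule (span subset_span)
open Matrix

variable {ι : Type*} {A : Matrix ι ι ℤ} {k : ι → ℤ}

theorem mulVec_injective_of_posDef [Fintype ι] (hA : A.PosDef) : Function.Injective A.mulVec := by
  refine (injective_iff_map_eq_zero A.mulVecLin).mpr fun x hx => ?_
  by_contra hx0
  simpa [show A *ᵥ x = 0 from hx] using hA.dotProduct_mulVec_pos hx0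

theorem exists_pos_mulVec_of_posDef [Fintype ι] (hA : A.PosDef) (hk : 0 ≤ k) (hk0 : k ≠ 0) :
    ∃ i, 0 < k i ∧ 0 < (A *ᵥ k) i := by
  by_contra! hle
  refine (hA.dotProduct_mulVec_pos hk0).not_ge (Finset.sum_nonpos fun i _ => ?_)
  obtain hi | hi := (hk i).eq_or_lt
  · simp [← hi]
  · exact mul_nonpos_of_nonneg_of_nonpos hi.le (hle i hi)

theorem mulVec_sub_single [Fintype ι] [DecidableEq ι] (k : ι → ℤ) (i : ι) :
    A *ᵥ (k - Pi.single i ((A *ᵥ k) i)) = reflect A i (A *ᵥ k) := by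
  ext j
  simp [mulVec_sub, mulVec_single, reflect, mul_comm]

variable {K L : Type*} [Field K] [CharZero K] [LieRing L] [LieAlgebra K L]
  {e f h : ι → L} {w : ι → ℤ}

/-- Reflecting in a simple root with which it pairs positively lowers the height of a positive
root, and keeps it positive unless it is that simple root. -/
theorem positive_root_induction [Fintype ι] (S : IsGeneratingSerreFamily K A e f h)
    (hA : A.PosDef) {Q : (ι → ℤ) → Prop} (simple : ∀ i, Q (A.col i))
    (refl : ∀ w i, Q w → Q (reflect A i w)) (hk : 0 ≤ k) (hk0 : k ≠ 0)
    (hne : wtSpace K L h (A *ᵥ k) ≠ ⊥) : Q (A *ᵥ k) := by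
  classical
  have hinj := mulVec_injective_of_posDef hA
  generalize hN : (∑ i, k i).toNat = N
  induction N using Nat.strong_induction_on generalizing k with
  | _ N ih =>
  obtain ⟨i, hki, hAi⟩ := exists_pos_mulVec_of_posDef hA hk hk0
  by_cases hsupp : ∀ j, j ≠ i → k j = 0
  · rw [eq_single_of_wtSpace_ne_bot S hinj hsupp hki hne, mulVec_single_one]
    exact simple i
  push Not at hsupp
  obtain ⟨j, hji, hkj⟩ := hsupp
  set k' := k - Pi.single i ((A *ᵥ k) i) with hk'
  have hk'j : k' j = k j := by simp [hk', hji]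
  have hrefl : A *ᵥ k' = reflect A i (A *ᵥ k) := mulVec_sub_single k i
  have hne' : wtSpace K L h (A *ᵥ k') ≠ ⊥ :=
    hrefl ▸ wtSpace_reflect_ne_bot S.toIsSerreFamily S.isIntegrable i hne
  have hpos : 0 ≤ k' := (nonneg_or_nonpos_of_wtSpace_ne_bot S hinj hne').resolve_right fun hneg =>
    hkj (le_antisymm (hk'j ▸ hneg j) (hk j))
  have hlt : (∑ l, k' l).toNat < N := by
    have hsum : ∑ l, k' l = ∑ l, k l - (A *ᵥ k) i := by simp [hk', Finset.sum_sub_distrib]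
    have hnonneg : 0 ≤ ∑ l, k' l := Finset.sum_nonneg fun l _ => hpos l
    omega
  have hk'0 : k' ≠ 0 := fun h0 => hkj (hk'j ▸ congrFun h0 j)
  have := refl _ i (ih _ hlt hpos hk'0 hne' rfl)
  rwa [hrefl, reflect_reflect (S.diag i)] at this

variable [Finite ι]

theorem root_induction (S : IsGeneratingSerreFamily K A e f h) (hA : A.PosDef)
    {Q : (ι → ℤ) → Prop} (simple : ∀ i, Q (A.col i)) (neg_simple : ∀ i, Q (-A.col i))
    (refl : ∀ w i, Q w → Q (reflect A i w)) (hw : w ≠ 0) (hne : wtSpace K L h w ≠ ⊥) : Q w := by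
  have := Fintype.ofFinite ι
  obtain ⟨k, rfl⟩ := exists_mulVec_eq_of_wtSpace_ne_bot S hne
  have hk0 : k ≠ 0 := by
    rintro rfl
    exact hw (mulVec_zero A)
  obtain hk | hk :=
    nonneg_or_nonpos_of_wtSpace_ne_bot S (mulVec_injective_of_posDef hA) hne
  · exact positive_root_induction S hA simple refl hk hk0 hne
  · rw [← wtSpace_neg_neg, ← mulVec_neg] at hne
    have := positive_root_induction (Q := fun w => Q (-w)) S.swap hA neg_simple
      (fun w i hw => by rw [← reflect_neg]; exact refl _ i hw) (neg_nonneg.mpr hk)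
      (neg_ne_zero.mpr hk0) hne
    rwa [mulVec_neg, neg_neg] at this

theorem wtSpace_col_le_span (S : IsGeneratingSerreFamily K A e f h) (hA : A.PosDef) (i : ι) :
    wtSpace K L h (A.col i) ≤ K ∙ e i := by
  classical
  have := Fintype.ofFinite ι
  rw [← mulVec_single_one]
  exact wtSpace_le_span_e S (mulVec_injective_of_posDef hA) (fun j hj => by simp [hj]) (by simp)

theorem wtSpace_neg_col_le_span (S : IsGeneratingSerreFamily K A e f h) (hA : A.PosDef) (i : ι) :
    wtSpace K L h (-A.col i) ≤ K ∙ f i := by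
  rw [← neg_neg h, wtSpace_neg_neg]
  exact wtSpace_col_le_span S.swap hA i

theorem rank_wtSpace_le_one (S : IsGeneratingSerreFamily K A e f h) (hA : A.PosDef) (hw : w ≠ 0) :
    Module.rank K (wtSpace K L h w) ≤ 1 := by
  by_cases hne : wtSpace K L h w = ⊥
  · rw [hne, rank_bot]
    exact zero_le_one
  refine root_induction (Q := fun w => Module.rank K (wtSpace K L h w) ≤ 1) S hA (fun i => ?_)
    (fun i => ?_) (fun w i hw => ?_) hw hne
  · exact (rank_submodule_le_one_iff' _).mpr ⟨e i, wtSpace_col_le_span S hA i⟩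
  · exact (rank_submodule_le_one_iff' _).mpr ⟨f i, wtSpace_neg_col_le_span S hA i⟩
  · have hrefl := exists_injective_wtSpace_reflect S.toIsSerreFamily S.isIntegrable
      (reflect A i w) i
    rw [reflect_reflect (S.diag i)] at hrefl
    obtain ⟨T, hT⟩ := hrefl
    exact (LinearMap.rank_le_of_injective T hT).trans hw

variable {R : Finset (ι → ℤ)}

theorem exists_span_range_eq_top (S : IsGeneratingSerreFamily K A e f h) (hA : A.PosDef)
    (hR : IsRootBound A R) : ∃ x : R → L, span K (Set.range (Sum.elim h x)) = ⊤ := by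
  classical
  have := Fintype.ofFinite ι
  have hspan (w : ι → ℤ) : ∃ x, w ≠ 0 → wtSpace K L h w ≤ K ∙ x := by
    by_cases hw : w = 0
    · exact ⟨0, fun h0 => absurd hw h0⟩
    · obtain ⟨x, hx⟩ := (rank_submodule_le_one_iff' _).mp (rank_wtSpace_le_one S hA hw)
      exact ⟨x, fun _ => hx⟩
  choose x hx using hspan
  refine ⟨fun w => x w, eq_top_iff.mpr ?_⟩
  rw [← iSup_span_degGenerators_eq_top S, Set.Sum.elim_range, Submodule.span_union]
  refine iSup_le fun k => (span_degGenerators_le_wtSpace S.toIsSerreFamily k).trans ?_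
  by_cases hbot : wtSpace K L h (A *ᵥ k) = ⊥
  · simp [hbot]
  by_cases hk : A *ᵥ k = 0
  · rw [hk, wtSpace_zero_eq_span S (mulVec_injective_of_posDef hA)]
    exact le_sup_left
  · have hmem : A *ᵥ k ∈ R := root_induction S hA hR.col_mem
      (fun i => hR.neg_mem _ (hR.col_mem i)) (fun w i hw => hR.reflect_mem hw i) hk hbot
    exact (hx _ hk).trans (le_sup_of_le_right (Submodule.span_mono
      (Set.singleton_subset_iff.mpr ⟨⟨_, hmem⟩, rfl⟩)))

theorem finiteDimensional_of_isRootBound (S : IsGeneratingSerreFamily K A e f h) (hA : A.PosDef)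
    (hR : IsRootBound A R) : FiniteDimensional K L := by
  obtain ⟨x, hx⟩ := exists_span_range_eq_top S hA hR
  exact ⟨hx ▸ Submodule.fg_span (Set.finite_range _)⟩

theorem finrank_le_of_isRootBound (S : IsGeneratingSerreFamily K A e f h) (hA : A.PosDef)
    (hR : IsRootBound A R) : finrank K L ≤ Nat.card ι + R.card := by
  have := Fintype.ofFinite ι
  obtain ⟨x, hx⟩ := exists_span_range_eq_top S hA hR
  have := finrank_range_le_card (R := K) (Sum.elim h x)
  rwa [Set.finrank, hx, finrank_top, Fintype.card_sum, Fintype.card_coe,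
    ← Nat.card_eq_fintype_card] at this

end Roots

section Simplicity

open Submodule (span)
open Matrix

variable {ι K L : Type*} [Field K] [CharZero K] [LieRing L] [LieAlgebra K L]
  {A : Matrix ι ι ℤ} {e f h : ι → L}

theorem e_mem_and_f_mem_of_h_mem (S : SerreRelations K A e f h) {I : LieIdeal K L} {i j : ι}
    (hij : A i j ≠ 0) (hi : h i ∈ I) : e j ∈ I ∧ f j ∈ I := by
  have hc : (A i j : K) ≠ 0 := Int.cast_ne_zero.mpr hij
  have he := lie_mem_left K L I _ (e j) hi
  have hf := lie_mem_left K L I _ (f j) hi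
  rw [S.lie_h_e] at he
  rw [S.lie_h_f, neg_mem_iff] at hf
  exact ⟨(Submodule.smul_mem_iff _ hc).mp he, (Submodule.smul_mem_iff _ hc).mp hf⟩

theorem lieIdeal_eq_top_of_h_mem [Fintype ι] (S : IsGeneratingSerreFamily K A e f h)
    (hc : IsIndecomposable A) {I : LieIdeal K L} {i : ι} (hi : h i ∈ I) : I = ⊤ := by
  classical
  have hH (j : ι) : h j ∈ I := by
    have := hc {j | h j ∈ I} ⟨i, by simpa⟩ fun i hi j hij => by
      rw [Finset.mem_filter_univ] at hi ⊢
      rw [← S.lie_e_f]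
      exact lie_mem_left K L I _ _ (e_mem_and_f_mem_of_h_mem S.toSerreRelations hij hi).1
    simpa using this.ge (Finset.mem_univ j)
  have hEF (j : ι) : e j ∈ I ∧ f j ∈ I :=
    e_mem_and_f_mem_of_h_mem S.toSerreRelations (by simp [S.diag j]) (hH j)
  rw [← LieSubmodule.toSubmodule_eq_top]
  refine eq_top_of_lieSpan_eq_top S.lieSpan_eq_top (Set.union_subset ?_ ?_)
    fun x _ m hm => lie_mem_right K L I _ _ hm
  · exact Set.range_subset_iff.mpr fun j => (hEF j).1
  · exact Set.range_subset_iff.mpr fun j => (hEF j).2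

theorem lieIdeal_eq_top_of_e_mem [Fintype ι] (S : IsGeneratingSerreFamily K A e f h)
    (hc : IsIndecomposable A) {I : LieIdeal K L} {i : ι} (hi : e i ∈ I) : I = ⊤ :=
  lieIdeal_eq_top_of_h_mem S hc (S.lie_e_f i ▸ lie_mem_left K L I _ _ hi)

theorem exists_lie_sum_smul_h_e_eq [Fintype ι] (S : SerreRelations K A e f h) (hA : A.PosDef)
    {c : ι → K} (hc : c ≠ 0) : ∃ j, ∃ a : K, a ≠ 0 ∧ ⁅∑ i, c i • h i, e j⁆ = a • e j := by
  classical
  have hdet : (A.map (Int.cast : ℤ → K)).det ≠ 0 := by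
    rw [← Int.cast_det, Int.cast_ne_zero]
    intro h0
    obtain ⟨v, hv, hAv⟩ := exists_mulVec_eq_zero_iff.mpr h0
    exact hv (mulVec_injective_of_posDef hA (hAv.trans (mulVec_zero A).symm))
  have hne : c ᵥ* A.map (Int.cast : ℤ → K) ≠ 0 := fun h0 =>
    hc (eq_zero_of_vecMul_eq_zero hdet h0)
  obtain ⟨j, hj⟩ := Function.ne_iff.mp hne
  refine ⟨j, _, hj, ?_⟩
  simp only [sum_lie, smul_lie, S.lie_h_e, smul_smul, ← Finset.sum_smul]
  rfl

theorem linearIndependent_h [Finite ι] (S : IsSerreFamily K A e f h) (hA : A.PosDef) :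
    LinearIndependent K h := by
  have := Fintype.ofFinite ι
  refine Fintype.linearIndependent_iff.mpr fun c hc => congrFun ?_
  by_contra hc0
  obtain ⟨j, a, ha, hj⟩ := exists_lie_sum_smul_h_e_eq S.toSerreRelations hA hc0
  rw [hc, zero_lie] at hj
  exact smul_ne_zero ha (S.isSl2Triple j).e_ne_zero hj.symm

variable [Fintype ι]

theorem card_le_finrank_wtSpace_zero [FiniteDimensional K L] (S : IsSerreFamily K A e f h)
    (hA : A.PosDef) : Fintype.card ι ≤ finrank K (wtSpace K L h 0) := by
  rw [← finrank_span_eq_card (linearIndependent_h S hA)]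
  exact Submodule.finrank_mono
    (Submodule.span_le.mpr (Set.range_subset_iff.mpr (h_mem_wtSpace S.toSerreRelations)))

theorem lieIdeal_eq_top_of_wtSpace_zero_ne_bot (S : IsGeneratingSerreFamily K A e f h)
    (hA : A.PosDef) (hc : IsIndecomposable A) {I : LieIdeal K L} (hne : wtSpace K I h 0 ≠ ⊥) :
    I = ⊤ := by
  obtain ⟨x, hx, hx0⟩ := Submodule.exists_mem_ne_zero_of_ne_bot hne
  have hxL : (x : L) ∈ wtSpace K L h 0 := (coe_mem_wtSpace_iff I x).mpr hx
  rw [wtSpace_zero_eq_span S (mulVec_injective_of_posDef hA)] at hxL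
  obtain ⟨c, hcx⟩ := (Submodule.mem_span_range_iff_exists_fun K).mp hxL
  have hc0 : c ≠ 0 := by
    rintro rfl
    exact hx0 (by simpa using hcx.symm)
  obtain ⟨j, a, ha, hj⟩ := exists_lie_sum_smul_h_e_eq S.toSerreRelations hA hc0
  have hmem := lie_mem_left K L I _ (e j) x.2
  rw [← hcx, hj] at hmem
  exact lieIdeal_eq_top_of_e_mem S hc ((Submodule.smul_mem_iff _ ha).mp hmem)

theorem lieIdeal_eq_top_of_wtSpace_col_ne_bot (S : IsGeneratingSerreFamily K A e f h)
    (hA : A.PosDef) (hc : IsIndecomposable A) {I : LieIdeal K L} {i : ι}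
    (hne : wtSpace K I h (A.col i) ≠ ⊥) : I = ⊤ := by
  obtain ⟨x, hx, hx0⟩ := Submodule.exists_mem_ne_zero_of_ne_bot hne
  obtain ⟨c, hcx⟩ := Submodule.mem_span_singleton.mp
    (wtSpace_col_le_span S hA i ((coe_mem_wtSpace_iff I x).mpr hx))
  have hc0 : c ≠ 0 := by
    rintro rfl
    exact hx0 (by simpa using hcx.symm)
  exact lieIdeal_eq_top_of_e_mem S hc ((Submodule.smul_mem_iff _ hc0).mp (hcx ▸ x.2))

theorem lieIdeal_eq_top [FiniteDimensional K L] (S : IsGeneratingSerreFamily K A e f h)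
    (hA : A.PosDef) (hc : IsIndecomposable A) {I : LieIdeal K L} (hI : I ≠ ⊥) : I = ⊤ := by
  have : Nontrivial I := (LieSubmodule.nontrivial_iff_ne_bot K L L).mpr hI
  have : FiniteDimensional K I := inferInstanceAs (FiniteDimensional K I.toSubmodule)
  obtain ⟨w, hw⟩ := exists_wtSpace_ne_bot (M := I) S.toIsSerreFamily
  by_cases hw0 : w = 0
  · exact lieIdeal_eq_top_of_wtSpace_zero_ne_bot S hA hc (hw0 ▸ hw)
  have hwL : wtSpace K L h w ≠ ⊥ := by
    obtain ⟨x, hx, hx0⟩ := Submodule.exists_mem_ne_zero_of_ne_bot hw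
    exact (Submodule.ne_bot_iff _).mpr ⟨x, (coe_mem_wtSpace_iff I x).mpr hx, by simpa using hx0⟩
  refine root_induction (Q := fun w => wtSpace K I h w ≠ ⊥ → I = ⊤) S hA
    (fun i => lieIdeal_eq_top_of_wtSpace_col_ne_bot S hA hc) (fun i hne => ?_)
    (fun w i ih hne => ih ?_) hw0 hwL hw
  · rw [← neg_neg h, wtSpace_neg_neg] at hne
    exact lieIdeal_eq_top_of_wtSpace_col_ne_bot S.swap hA hc hne
  · have := wtSpace_reflect_ne_bot S.toIsSerreFamily
      (isIntegrable_of_finiteDimensional S.toIsSerreFamily) i hne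
    rwa [reflect_reflect (S.diag i)] at this

theorem isSimple [FiniteDimensional K L] [Nonempty ι] (S : IsGeneratingSerreFamily K A e f h)
    (hA : A.PosDef) (hc : IsIndecomposable A) : LieAlgebra.IsSimple K L where
  eq_bot_or_eq_top _ := or_iff_not_imp_left.mpr (lieIdeal_eq_top S hA hc)
  non_abelian hab := by
    obtain ⟨i⟩ := ‹Nonempty ι›
    exact S.h_ne_zero i (S.lie_e_f i ▸ hab.trivial _ _)

end Simplicity

section Multiplicities

variable {ι K L M : Type*} [Field K] [CharZero K] [LieRing L] [LieAlgebra K L] [AddCommGroup M]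
  [Module K M] [LieRingModule L M] [LieModule K L M] [FiniteDimensional K M] {A : Matrix ι ι ℤ}
  {e f h : ι → L} {w : ι → ℤ}

theorem finrank_wtSpace_reflect (S : IsSerreFamily K A e f h) (i : ι) :
    finrank K (wtSpace K M h (reflect A i w)) = finrank K (wtSpace K M h w) := by
  have hle (w : ι → ℤ) :
      finrank K (wtSpace K M h w) ≤ finrank K (wtSpace K M h (reflect A i w)) := by
    obtain ⟨T, hT⟩ :=
      exists_injective_wtSpace_reflect S (isIntegrable_of_finiteDimensional (M := M) S) w i
    exact LinearMap.finrank_le_finrank_of_injective hT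
  refine le_antisymm ((hle _).trans_eq ?_) (hle w)
  rw [reflect_reflect (S.diag i)]

theorem wtSpace_reflect_le (S : IsSerreFamily K A e f h) {i : ι} {N : Submodule K M}
    (he : ∀ m ∈ N, ⁅e i, m⁆ ∈ N) (hf : ∀ m ∈ N, ⁅f i, m⁆ ∈ N) (hw : wtSpace K M h w ≤ N) :
    wtSpace K M h (reflect A i w) ≤ N := by
  obtain ⟨x, hx, n, hmaps, hdisj⟩ :=
    exists_pow_mapsTo_reflect S (isIntegrable_of_finiteDimensional (M := M) S) w i
  have hstable : ∀ m ∈ N, toEnd K L M x m ∈ N := by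
    rcases hx with rfl | rfl
    · exact he
    · exact hf
  have hsurj : Function.Surjective ((toEnd K L M x ^ n).restrict hmaps) :=
    (LinearMap.injective_iff_surjective_of_finrank_eq_finrank
      (finrank_wtSpace_reflect S i).symm).mp ((LinearMap.injective_restrict_iff hmaps).mpr hdisj)
  intro m hm
  obtain ⟨m', hm'⟩ := hsurj ⟨m, hm⟩
  rw [← show (toEnd K L M x ^ n) m' = m from congrArg Subtype.val hm']
  exact Module.End.pow_apply_mem_of_forall_mem n hstable _ (hw m'.2)

theorem wtSpace_sub_nsmul_ne_bot (S : IsSerreFamily K A e f h) (hw : wtSpace K M h w ≠ ⊥) {i : ι}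
    {k : ℕ} (hk : (k : ℤ) ≤ w i) : wtSpace K M h (w - k • A.col i) ≠ ⊥ := by
  obtain ⟨m, hm, hm0⟩ := Submodule.exists_mem_ne_zero_of_ne_bot hw
  have hmem := toEnd_pow_mem_wtSpace (f_mem_wtSpace S.toSerreRelations i) hm k
  rw [smul_neg, ← sub_eq_add_neg] at hmem
  exact (Submodule.ne_bot_iff _).mpr ⟨_, hmem, fun h0 => hm0 (Submodule.disjoint_def.mp
    (disjoint_wtSpace_ker_f_pow S (isIntegrable_of_finiteDimensional S) i hk) m hm h0)⟩

theorem finite_setOf_wtSpace_ne_bot (S : SerreRelations K A e f h) :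
    {w | wtSpace K M h w ≠ ⊥}.Finite :=
  WellFoundedGT.finite_ne_bot_of_iSupIndep (iSupIndep_wtSpace S)

theorem sum_finrank_wtSpace_le (S : SerreRelations K A e f h) (s : Finset (ι → ℤ)) :
    ∑ w ∈ s, finrank K (wtSpace K M h w) ≤ finrank K M := by
  classical
  have hindep : iSupIndep fun w : s => wtSpace K M h w :=
    (iSupIndep_wtSpace S).comp Subtype.val_injective
  rw [← s.sum_coe_sort, ← finrank_directSum]
  exact LinearMap.finrank_le_finrank_of_injective hindep.dfinsupp_lsum_injective

theorem card_le_finrank_of_wtSpace_ne_bot (S : SerreRelations K A e f h) {s : Finset (ι → ℤ)}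
    (hs : ∀ w ∈ s, wtSpace K M h w ≠ ⊥) : s.card ≤ finrank K M := by
  rw [Finset.card_eq_sum_ones]
  exact (Finset.sum_le_sum fun w hw => Submodule.one_le_finrank_iff.mpr (hs w hw)).trans
    (sum_finrank_wtSpace_le S s)

end Multiplicities

section Orbits

variable {ι : Type*} [Fintype ι] {A : Matrix ι ι ℤ} {R s : Finset (ι → ℤ)}
  {u w : ι → ℤ} {d : ℕ}

/-- The weights obtained from those in `s` by at most `d` successive simple reflections, each of
which lowers the weight. For dominant weights and large `d` this is the Weyl orbit, in a form
which the kernel can enumerate. -/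
def loweringOrbit (A : Matrix ι ι ℤ) : ℕ → Finset (ι → ℤ) → Finset (ι → ℤ)
  | 0, s => s
  | d + 1, s => s ∪ loweringOrbit A d
      (s.biUnion fun w => (Finset.univ.filter fun i => 0 < w i).image fun i => reflect A i w)

theorem subset_loweringOrbit : s ⊆ loweringOrbit A d s := by
  cases d with
  | zero => exact Finset.Subset.refl s
  | succ d => exact Finset.subset_union_left

theorem loweringOrbit_induction {Q : (ι → ℤ) → Prop} (hs : ∀ w ∈ s, Q w)
    (hQ : ∀ w i, 0 < w i → Q w → Q (reflect A i w)) (hu : u ∈ loweringOrbit A d s) : Q u := by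
  induction d generalizing s with
  | zero => exact hs u hu
  | succ d ih =>
    rcases Finset.mem_union.mp hu with hu | hu
    · exact hs u hu
    · refine ih (fun w hw => ?_) hu
      simp only [Finset.mem_biUnion, Finset.mem_image, Finset.mem_filter_univ] at hw
      obtain ⟨w, hw, i, hi, rfl⟩ := hw
      exact hQ w i hi (hs w hw)

variable {K L M : Type*} [Field K] [CharZero K] [LieRing L] [LieAlgebra K L] [AddCommGroup M]
  [Module K M] [LieRingModule L M] [LieModule K L M] [FiniteDimensional K M] {e f h : ι → L}

theorem finrank_wtSpace_of_mem_loweringOrbit (S : IsSerreFamily K A e f h)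
    (hu : u ∈ loweringOrbit A d {w}) :
    finrank K (wtSpace K M h u) = finrank K (wtSpace K M h w) :=
  loweringOrbit_induction (Q := fun u => finrank K (wtSpace K M h u) = finrank K (wtSpace K M h w))
    (by simp) (fun _ i _ hu => (finrank_wtSpace_reflect S i).trans hu) hu

theorem wtSpace_le_iff_of_mem_loweringOrbit (S : IsSerreFamily K A e f h) {N : Submodule K M}
    (he : ∀ i, ∀ m ∈ N, ⁅e i, m⁆ ∈ N) (hf : ∀ i, ∀ m ∈ N, ⁅f i, m⁆ ∈ N)
    (hu : u ∈ loweringOrbit A d {w}) : wtSpace K M h u ≤ N ↔ wtSpace K M h w ≤ N := by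
  have hreflect (v : ι → ℤ) (i : ι) : wtSpace K M h v ≤ N → wtSpace K M h (reflect A i v) ≤ N :=
    wtSpace_reflect_le S (he i) (hf i)
  refine loweringOrbit_induction (Q := fun u => wtSpace K M h u ≤ N ↔ wtSpace K M h w ≤ N)
    (by simp) (fun v i _ hv => .trans ⟨fun hle => ?_, hreflect v i⟩ hv) hu
  simpa only [reflect_reflect (S.diag i)] using hreflect _ i hle

theorem sum_finrank_wtSpace_loweringOrbit (S : IsSerreFamily K A e f h) :
    ∑ u ∈ loweringOrbit A d {w}, finrank K (wtSpace K M h u) =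
      (loweringOrbit A d {w}).card * finrank K (wtSpace K M h w) :=
  Finset.sum_const_nat fun _ hu => finrank_wtSpace_of_mem_loweringOrbit S hu

/-- If `u` is in the orbit of `w`, the reflections which lower `u` can be imitated inside the
strings through `u + (w' - w)`, which yields at least as many weights. -/
theorem card_loweringOrbit_le_finrank (S : IsSerreFamily K A e f h) {w' : ι → ℤ}
    (hw' : wtSpace K M h w' ≠ ⊥) (hle : w ≤ w') (d : ℕ) :
    (loweringOrbit A d {w}).card ≤ finrank K M := by
  have hshift (u : ι → ℤ) (hu : u ∈ loweringOrbit A d {w}) :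
      wtSpace K M h (u + (w' - w)) ≠ ⊥ := by
    refine loweringOrbit_induction (Q := fun u => wtSpace K M h (u + (w' - w)) ≠ ⊥)
      (by simpa using hw') (fun u i hi hu => ?_) hu
    have hk : ((u i).toNat : ℤ) ≤ (u + (w' - w)) i :=
      (Int.toNat_of_nonneg hi.le).trans_le (le_add_of_nonneg_right (sub_nonneg.mpr (hle i)))
    have hne := wtSpace_sub_nsmul_ne_bot S hu hk
    rwa [← natCast_zsmul, Int.toNat_of_nonneg hi.le, add_sub_right_comm] at hne
  rw [← Finset.card_map (addRightEmbedding (w' - w))]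
  refine card_le_finrank_of_wtSpace_ne_bot (M := M) S.toSerreRelations fun v hv => ?_
  obtain ⟨u, hu, rfl⟩ := Finset.mem_map.mp hv
  exact hshift u hu

/-- A weight outside `R` which is maximal for the height function `c ⬝ᵥ ·` would be dominant. -/
theorem mem_of_forall_dominant_mem (S : IsSerreFamily K A e f h) {c : ι → ℤ}
    (hc : ∀ i, 0 < c ⬝ᵥ A.col i) (hR : ∀ w ∈ R, ∀ i, 0 < w i → reflect A i w ∈ R)
    (hdom : ∀ w, 0 ≤ w → wtSpace K M h w ≠ ⊥ → w ∈ R) (hw : wtSpace K M h w ≠ ⊥) : w ∈ R := by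
  by_contra hwR
  obtain ⟨u, ⟨hu, huR⟩, hmax⟩ :=
    Set.exists_max_image {u | wtSpace K M h u ≠ ⊥ ∧ u ∉ R} (c ⬝ᵥ ·)
      ((finite_setOf_wtSpace_ne_bot S.toSerreRelations).subset fun _ hu => hu.1) ⟨w, hw, hwR⟩
  refine huR (hdom u (fun i => not_lt.mp fun hi => ?_) hu)
  have hreflR : reflect A i u ∉ R := fun hmem => huR <| by
    have := hR _ hmem i (by rw [reflect_apply, S.diag]; simp only [Pi.zero_apply] at hi; omega)
    rwa [reflect_reflect (S.diag i)] at this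
  have hrefl := wtSpace_reflect_ne_bot S (isIntegrable_of_finiteDimensional S) i hu
  have hheight : c ⬝ᵥ reflect A i u = c ⬝ᵥ u - u i * (c ⬝ᵥ A.col i) := by
    rw [reflect, dotProduct_sub, dotProduct_smul, smul_eq_mul]
  have hle := hheight.symm.trans_le (hmax _ ⟨hrefl, hreflR⟩)
  have hneg : u i * (c ⬝ᵥ A.col i) < 0 := mul_neg_of_neg_of_pos hi (hc i)
  linarith

end Orbits

section KillingForm

variable {ι K L : Type*} [Field K] [CharZero K] [LieRing L] [LieAlgebra K L]
  [FiniteDimensional K L] {A : Matrix ι ι ℤ} {e f h : ι → L} {v w : ι → ℤ}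

theorem killingForm_eq_zero_of_mem_wtSpace (S : IsSerreFamily K A e f h) (hvw : v + w ≠ 0)
    {x y : L} (hx : x ∈ wtSpace K L h v) (hy : y ∈ wtSpace K L h w) :
    killingForm K L x y = 0 := by
  classical
  have hinternal : DirectSum.IsInternal (wtSpace K L h) :=
    (DirectSum.isInternal_submodule_iff_iSupIndep_and_iSup_eq_top _).mpr
      ⟨iSupIndep_wtSpace S.toSerreRelations, iSup_wtSpace_eq_top S⟩
  rw [killingForm_apply_apply]
  refine LinearMap.trace_eq_zero_of_mapsTo_ne hinternal (fun u => v + (w + u)) (fun u h0 => hvw ?_)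
    fun u z hz => lie_mem_wtSpace hx (lie_mem_wtSpace hy hz)
  simpa [← add_assoc] using h0

theorem exists_killingForm_ne_zero [LieAlgebra.IsKilling K L] (S : IsSerreFamily K A e f h) {x : L}
    (hx : x ∈ wtSpace K L h w) (hx0 : x ≠ 0) :
    ∃ y ∈ wtSpace K L h (-w), killingForm K L x y ≠ 0 := by
  by_contra! horth
  have htop : LinearMap.ker (killingForm K L x) = ⊤ := by
    rw [eq_top_iff, ← iSup_wtSpace_eq_top S]
    refine iSup_le fun v y hy => ?_
    by_cases hwv : w + v = 0
    · exact horth y (eq_neg_of_add_eq_zero_right hwv ▸ hy)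
    · exact killingForm_eq_zero_of_mem_wtSpace S hwv hx hy
  have hker : x ∈ LinearMap.ker (killingForm K L) := LinearMap.ker_eq_top.mp htop
  rw [LieAlgebra.IsKilling.ker_killingForm_eq_bot] at hker
  exact hx0 hker

theorem wtSpace_neg_ne_bot [LieAlgebra.IsKilling K L] (S : IsSerreFamily K A e f h)
    (hw : wtSpace K L h w ≠ ⊥) : wtSpace K L h (-w) ≠ ⊥ := by
  obtain ⟨x, hx, hx0⟩ := Submodule.exists_mem_ne_zero_of_ne_bot hw
  obtain ⟨y, hy, hxy⟩ := exists_killingForm_ne_zero S hx hx0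
  refine (Submodule.ne_bot_iff _).mpr ⟨y, hy, ?_⟩
  rintro rfl
  simp at hxy

end KillingForm

section Exceptional

open CartanMatrix Matrix

theorem e₆_eq_submatrix_e₇ : E₆ = E₇.submatrix Fin.castSucc Fin.castSucc := by
  decide

/-- The squares are completed along the Dynkin diagram, from its ends towards the branch node. -/
theorem posDef_e₇ : E₇.PosDef := by
  refine .of_dotProduct_mulVec_pos (by simpa using E₇_isSymm) fun {k} hk => ?_
  have hsq : 12 * (k ⬝ᵥ E₇ *ᵥ k) = 6 * (2 * k 0 - k 2) ^ 2 + 2 * (3 * k 2 - 2 * k 3) ^ 2 +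
      6 * (2 * k 1 - k 3) ^ 2 + 6 * (2 * k 6 - k 5) ^ 2 + 2 * (3 * k 5 - 2 * k 4) ^ 2 +
      (4 * k 4 - 3 * k 3) ^ 2 + k 3 ^ 2 := by
    simp [E₇, mulVec, dotProduct, Fin.sum_univ_succ]
    ring
  rw [star_trivial]
  by_contra! hle
  have hzero : (2 * k 0 - k 2) ^ 2 = 0 ∧ (3 * k 2 - 2 * k 3) ^ 2 = 0 ∧ (2 * k 1 - k 3) ^ 2 = 0 ∧
      (2 * k 6 - k 5) ^ 2 = 0 ∧ (3 * k 5 - 2 * k 4) ^ 2 = 0 ∧ (4 * k 4 - 3 * k 3) ^ 2 = 0 ∧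
      k 3 ^ 2 = 0 := by
    refine ⟨?_, ?_, ?_, ?_, ?_, ?_, ?_⟩ <;> refine le_antisymm ?_ (sq_nonneg _) <;>
    linarith [sq_nonneg (2 * k 0 - k 2), sq_nonneg (3 * k 2 - 2 * k 3),
      sq_nonneg (2 * k 1 - k 3), sq_nonneg (2 * k 6 - k 5), sq_nonneg (3 * k 5 - 2 * k 4),
      sq_nonneg (4 * k 4 - 3 * k 3), sq_nonneg (k 3)]
  simp only [sq_eq_zero_iff] at hzero
  refine hk (funext fun i => ?_)
  rw [Pi.zero_apply]
  fin_cases i <;> simp only [Fin.reduceFinMk, Fin.isValue, Fin.zero_eta, Fin.mk_one] <;> omega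

theorem posDef_e₆ : E₆.PosDef := by
  rw [e₆_eq_submatrix_e₇]
  exact posDef_e₇.submatrix (Fin.castSucc_injective 6)

theorem isIndecomposable_e₆ : IsIndecomposable E₆ := by
  decide +kernel

theorem isIndecomposable_e₇ : IsIndecomposable E₇ := by
  decide +kernel

/-- The roots of `E₆`, generated from the highest root. -/
def rootsE₆ : Finset (Fin 6 → ℤ) := loweringOrbit E₆ 21 {![0, 1, 0, 0, 0, 0]}

/-- The roots of `E₇`, generated from the highest root. -/
def rootsE₇ : Finset (Fin 7 → ℤ) := loweringOrbit E₇ 33 {![1, 0, 0, 0, 0, 0, 0]}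

set_option maxRecDepth 100000 in
theorem card_rootsE₆ : rootsE₆.card = 72 := by
  decide +kernel

set_option maxRecDepth 100000 in
theorem isRootBound_rootsE₆ : IsRootBound E₆ rootsE₆ := by
  decide +kernel

set_option maxRecDepth 100000 in
theorem card_rootsE₇ : rootsE₇.card = 126 := by
  decide +kernel

set_option maxRecDepth 100000 in
theorem isRootBound_rootsE₇ : IsRootBound E₇ rootsE₇ := by
  decide +kernel

variable {K L : Type*} [Field K] [CharZero K] [LieRing L] [LieAlgebra K L]

theorem finrank_le_of_e₆ {e f h : Fin 6 → L} (S : IsGeneratingSerreFamily K E₆ e f h) :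
    finrank K L ≤ 78 := by
  have hle := finrank_le_of_isRootBound S posDef_e₆ isRootBound_rootsE₆
  rwa [card_rootsE₆, Nat.card_fin] at hle

variable {e f h : Fin 7 → L}

theorem finrank_le_of_e₇ (S : IsGeneratingSerreFamily K E₇ e f h) : finrank K L ≤ 133 := by
  have hle := finrank_le_of_isRootBound S posDef_e₇ isRootBound_rootsE₇
  rwa [card_rootsE₇, Nat.card_fin] at hle

theorem card_rootsE₇_le_finrank [FiniteDimensional K L] (S : IsSerreFamily K E₇ e f h) :
    126 ≤ finrank K L := by
  have hroot {w : Fin 7 → ℤ} (hw : w ∈ rootsE₇) :=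
    finrank_wtSpace_of_mem_loweringOrbit (M := L) S hw
  have hcol : wtSpace K L h (E₇.col 0) ≠ ⊥ :=
    (Submodule.ne_bot_iff _).mpr
      ⟨e 0, e_mem_wtSpace S.toSerreRelations 0, (S.isSl2Triple 0).e_ne_zero⟩
  rw [← card_rootsE₇]
  refine card_le_finrank_of_wtSpace_ne_bot (M := L) S.toSerreRelations fun w hw => ?_
  rw [← Submodule.one_le_finrank_iff, hroot hw, ← hroot (isRootBound_rootsE₇.col_mem 0)]
  exact Submodule.one_le_finrank_iff.mpr hcol

end Exceptional

section SmallWeights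

open CartanMatrix Matrix

/-- The weights of the 27-dimensional representation of `E₆` with highest weight `ω₁`. -/
def weights₂₇ : Finset (Fin 6 → ℤ) := loweringOrbit E₆ 16 {![1, 0, 0, 0, 0, 0]}

/-- The weights of the dual 27-dimensional representation of `E₆`, with highest weight `ω₆`. -/
def weights₂₇Dual : Finset (Fin 6 → ℤ) := loweringOrbit E₆ 16 {![0, 0, 0, 0, 0, 1]}

/-- The weights of `E₆` which can occur in a module of dimension at most 133: those of the trivial
and the adjoint representation and of the two 27-dimensional representations. -/
def smallWeights : Finset (Fin 6 → ℤ) := insert 0 rootsE₆ ∪ (weights₂₇ ∪ weights₂₇Dual)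

/-- Dominant weights of `E₆` whose orbits have more than 133 elements: `ω₃`, `ω₄`, `ω₅`, `ω₁ + ω₆`,
`ω₁ + ω₂` and `ω₂ + ω₆`. -/
def largeWeights : Finset (Fin 6 → ℤ) :=
  {![0, 0, 1, 0, 0, 0], ![0, 0, 0, 1, 0, 0], ![0, 0, 0, 0, 1, 0], ![1, 0, 0, 0, 0, 1],
    ![1, 1, 0, 0, 0, 0], ![0, 1, 0, 0, 0, 1]}

theorem card_weights₂₇ : weights₂₇.card = 27 := by
  decide +kernel

theorem card_weights₂₇Dual : weights₂₇Dual.card = 27 := by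
  decide +kernel

theorem reflect_mem_weights₂₇ :
    ∀ w ∈ weights₂₇, ∀ i, 0 < w i → reflect E₆ i w ∈ weights₂₇ := by
  decide +kernel

theorem reflect_mem_weights₂₇Dual :
    ∀ w ∈ weights₂₇Dual, ∀ i, 0 < w i → reflect E₆ i w ∈ weights₂₇Dual := by
  decide +kernel

theorem zero_notMem_rootsE₆ : 0 ∉ rootsE₆ := by
  decide +kernel

theorem disjoint_weights₂₇_weights₂₇Dual : Disjoint weights₂₇ weights₂₇Dual := by
  decide +kernel

theorem disjoint_insert_zero_rootsE₆_weights₂₇ :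
    Disjoint (insert 0 rootsE₆) (weights₂₇ ∪ weights₂₇Dual) := by
  decide +kernel

theorem reflect_mem_smallWeights {w : Fin 6 → ℤ} (hw : w ∈ smallWeights) {i : Fin 6}
    (hi : 0 < w i) : reflect E₆ i w ∈ smallWeights := by
  simp only [smallWeights, Finset.mem_union, Finset.mem_insert] at hw ⊢
  rcases hw with (rfl | hw) | hw | hw
  · exact absurd hi (lt_irrefl 0)
  · exact .inl (.inr (isRootBound_rootsE₆.reflect_mem_of_pos w hw i hi))
  · exact .inr (.inl (reflect_mem_weights₂₇ w hw i hi))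
  · exact .inr (.inr (reflect_mem_weights₂₇Dual w hw i hi))

set_option maxRecDepth 100000 in
theorem exists_lt_card_loweringOrbit {ν : Fin 6 → ℤ} (hν : ν ∈ largeWeights) :
    ∃ d, 133 < (loweringOrbit E₆ d {ν}).card := by
  simp only [largeWeights, Finset.mem_insert, Finset.mem_singleton] at hν
  rcases hν with rfl | rfl | rfl | rfl | rfl | rfl
  exacts [⟨14, by decide +kernel⟩, ⟨10, by decide +kernel⟩, ⟨14, by decide +kernel⟩,
    ⟨12, by decide +kernel⟩, ⟨10, by decide +kernel⟩, ⟨10, by decide +kernel⟩]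

/-- Three times the inverse of `E₆`: the Gram matrix of the fundamental weights, scaled to be
integral. -/
def gramE₆ : Matrix (Fin 6) (Fin 6) ℤ :=
  !![4, 3, 5, 6, 4, 2; 3, 6, 6, 9, 6, 3; 5, 6, 10, 12, 8, 4; 6, 9, 12, 18, 12, 6;
    4, 6, 8, 12, 10, 5; 2, 3, 4, 6, 5, 4]

set_option maxRecDepth 100000 in
theorem dotProduct_gramE₆_mulVec_le {w : Fin 6 → ℤ} (hw : w ∈ smallWeights) :
    w ⬝ᵥ gramE₆ *ᵥ w ≤ 6 := by
  revert w
  decide +kernel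

/-- The multiples `2ω₁`, `2ω₂`, `2ω₆` are excluded by one step down the string of the
corresponding simple root, which lands above `ω₃`, `ω₄` or `ω₅`. -/
theorem mem_smallWeights_of_dominant {w : Fin 6 → ℤ} (hw : 0 ≤ w)
    (hlarge : ∀ ν ∈ largeWeights, ¬ ν ≤ w)
    (hstep : ∀ i, 0 < w i → ∀ ν ∈ largeWeights, ¬ ν ≤ w - E₆.col i) : w ∈ smallWeights := by
  have hnonneg : 0 ≤ w 0 ∧ 0 ≤ w 1 ∧ 0 ≤ w 2 ∧ 0 ≤ w 3 ∧ 0 ≤ w 4 ∧ 0 ≤ w 5 := by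
    simpa [Pi.le_def, Fin.forall_fin_succ] using hw
  simp only [largeWeights, Finset.forall_mem_insert, Finset.mem_singleton, forall_eq] at hlarge
  have hlt : w 2 < 1 ∧ w 3 < 1 ∧ w 4 < 1 ∧ (1 ≤ w 0 → w 5 < 1) ∧ (1 ≤ w 0 → w 1 < 1) ∧
      (1 ≤ w 1 → w 5 < 1) := by
    simpa [Pi.le_def, Fin.forall_fin_succ, hnonneg] using hlarge
  have hzero : w 2 = 0 ∧ w 3 = 0 ∧ w 4 = 0 := by omega
  have hle₀ (hpos : 0 < w 0) : w 0 ≤ 1 := by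
    simpa [Pi.le_def, Fin.forall_fin_succ, E₆, hnonneg, hzero] using
      hstep 0 hpos ![0, 0, 1, 0, 0, 0] (by decide)
  have hle₁ (hpos : 0 < w 1) : w 1 ≤ 1 := by
    simpa [Pi.le_def, Fin.forall_fin_succ, E₆, hnonneg, hzero] using
      hstep 1 hpos ![0, 0, 0, 1, 0, 0] (by decide)
  have hle₅ (hpos : 0 < w 5) : w 5 ≤ 1 := by
    simpa [Pi.le_def, Fin.forall_fin_succ, E₆, hnonneg, hzero] using
      hstep 5 hpos ![0, 0, 0, 0, 1, 0] (by decide)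
  have hcases : w = 0 ∨ w = ![1, 0, 0, 0, 0, 0] ∨ w = ![0, 1, 0, 0, 0, 0] ∨
      w = ![0, 0, 0, 0, 0, 1] := by
    simp only [funext_iff, Pi.zero_apply, Fin.forall_fin_succ, Fin.isValue, Fin.succ_zero_eq_one,
      Fin.succ_one_eq_two, hzero, Fin.reduceSucc, IsEmpty.forall_iff, and_true, true_and,
      Nat.succ_eq_add_one, Nat.reduceAdd, cons_val_zero, cons_val_succ, cons_val_fin_one]
    omega
  have hmem {d : ℕ} {ν : Fin 6 → ℤ} : ν ∈ loweringOrbit E₆ d {ν} :=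
    subset_loweringOrbit (Finset.mem_singleton_self ν)
  rw [smallWeights, Finset.mem_union, Finset.mem_insert, Finset.mem_union]
  rcases hcases with rfl | rfl | rfl | rfl
  exacts [.inl (.inl rfl), .inr (.inl hmem), .inl (.inr hmem), .inr (.inr hmem)]

variable {K L M : Type*} [Field K] [CharZero K] [LieRing L] [LieAlgebra K L] [AddCommGroup M]
  [Module K M] [LieRingModule L M] [LieModule K L M] [FiniteDimensional K M] {e f h : Fin 6 → L}
  {w : Fin 6 → ℤ}

theorem mem_smallWeights_of_wtSpace_ne_bot (S : IsSerreFamily K E₆ e f h)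
    (hM : finrank K M ≤ 133) (hw : wtSpace K M h w ≠ ⊥) : w ∈ smallWeights := by
  have hlarge {w : Fin 6 → ℤ} (hw : wtSpace K M h w ≠ ⊥) (ν : Fin 6 → ℤ)
      (hν : ν ∈ largeWeights) : ¬ ν ≤ w := fun hle => by
    obtain ⟨d, hd⟩ := exists_lt_card_loweringOrbit hν
    exact (hd.trans_le ((card_loweringOrbit_le_finrank S hw hle d).trans hM)).false
  -- `c` is twice the sum of the rows of `E₆⁻¹`, so that `c ⬝ᵥ ·` is twice the height.
  have hc : ∀ i, 0 < ![16, 22, 30, 42, 30, 16] ⬝ᵥ E₆.col i := by decide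
  refine mem_of_forall_dominant_mem S hc (fun w hw i hi => reflect_mem_smallWeights hw hi)
    (fun w hdom hw => mem_smallWeights_of_dominant hdom (hlarge hw) fun i hi => ?_) hw
  have hne := wtSpace_sub_nsmul_ne_bot S hw (i := i) (k := 1) (Int.add_one_le_of_lt hi)
  rw [one_smul] at hne
  exact hlarge hne

theorem sum_finrank_wtSpace_smallWeights_le (S : IsSerreFamily K E₆ e f h) :
    finrank K (wtSpace K M h 0) + 72 * finrank K (wtSpace K M h ![0, 1, 0, 0, 0, 0]) +
      27 * (finrank K (wtSpace K M h ![1, 0, 0, 0, 0, 0]) +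
        finrank K (wtSpace K M h ![0, 0, 0, 0, 0, 1])) ≤ finrank K M := by
  have hsum := sum_finrank_wtSpace_le (M := M) S.toSerreRelations smallWeights
  rw [smallWeights, Finset.sum_union disjoint_insert_zero_rootsE₆_weights₂₇,
    Finset.sum_insert zero_notMem_rootsE₆, Finset.sum_union disjoint_weights₂₇_weights₂₇Dual,
    rootsE₆, weights₂₇, weights₂₇Dual, sum_finrank_wtSpace_loweringOrbit S,
    sum_finrank_wtSpace_loweringOrbit S, sum_finrank_wtSpace_loweringOrbit S, ← rootsE₆,
    ← weights₂₇, ← weights₂₇Dual, card_rootsE₆, card_weights₂₇, card_weights₂₇Dual] at hsum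
  omega

end SmallWeights

section KillingWeights

open CartanMatrix Matrix
open LieAlgebra (IsKilling)

variable {K L : Type*} [Field K] [CharZero K] [LieRing L] [LieAlgebra K L]
  [FiniteDimensional K L] [IsKilling K L] {e f h : Fin 6 → L} {w : Fin 6 → ℤ}

/-- The two 27-dimensional representations are dual to each other, hence occur equally often, and
the bound on the dimension leaves room for at most one pair of them. -/
theorem finrank_wtSpace_fundamental (S : IsSerreFamily K E₆ e f h) (hL : finrank K L ≤ 133) :
    finrank K (wtSpace K L h ![0, 1, 0, 0, 0, 0]) = 1 ∧
      (finrank K (wtSpace K L h ![1, 0, 0, 0, 0, 0]) = 0 ∧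
          finrank K (wtSpace K L h ![0, 0, 0, 0, 0, 1]) = 0 ∨
        finrank K (wtSpace K L h ![1, 0, 0, 0, 0, 0]) = 1 ∧
          finrank K (wtSpace K L h ![0, 0, 0, 0, 0, 1]) = 1) := by
  have hzero := card_le_finrank_wtSpace_zero S posDef_e₆
  rw [Fintype.card_fin] at hzero
  have hroot : 1 ≤ finrank K (wtSpace K L h ![0, 1, 0, 0, 0, 0]) := by
    rw [← finrank_wtSpace_of_mem_loweringOrbit S (isRootBound_rootsE₆.col_mem 0),
      Submodule.one_le_finrank_iff]
    exact (Submodule.ne_bot_iff _).mpr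
      ⟨e 0, e_mem_wtSpace S.toSerreRelations 0, (S.isSl2Triple 0).e_ne_zero⟩
  have hdual {w : Fin 6 → ℤ} (hw : 1 ≤ finrank K (wtSpace K L h w)) :
      1 ≤ finrank K (wtSpace K L h (-w)) :=
    Submodule.one_le_finrank_iff.mpr (wtSpace_neg_ne_bot S (Submodule.one_le_finrank_iff.mp hw))
  have hdual₁ := hdual (w := ![1, 0, 0, 0, 0, 0])
  have hdual₆ := hdual (w := ![0, 0, 0, 0, 0, 1])
  have hmem₁ : -![1, 0, 0, 0, 0, 0] ∈ weights₂₇Dual := by decide +kernel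
  have hmem₆ : -![0, 0, 0, 0, 0, 1] ∈ weights₂₇ := by decide +kernel
  rw [finrank_wtSpace_of_mem_loweringOrbit S hmem₁] at hdual₁
  rw [finrank_wtSpace_of_mem_loweringOrbit S hmem₆] at hdual₆
  have hsum := sum_finrank_wtSpace_smallWeights_le (M := L) S
  omega

theorem finrank_wtSpace_eq_one_of_mem_rootsE₆ (S : IsSerreFamily K E₆ e f h)
    (hL : finrank K L ≤ 133) (hw : w ∈ rootsE₆) : finrank K (wtSpace K L h w) = 1 :=
  (finrank_wtSpace_of_mem_loweringOrbit S hw).trans (finrank_wtSpace_fundamental S hL).1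

theorem finrank_wtSpace_weights₂₇_eq_zero_or_eq_one (S : IsSerreFamily K E₆ e f h)
    (hL : finrank K L ≤ 133) :
    (∀ w ∈ weights₂₇ ∪ weights₂₇Dual, finrank K (wtSpace K L h w) = 0) ∨
      ∀ w ∈ weights₂₇ ∪ weights₂₇Dual, finrank K (wtSpace K L h w) = 1 := by
  have hconst {n : ℕ} (h₁ : finrank K (wtSpace K L h ![1, 0, 0, 0, 0, 0]) = n)
      (h₆ : finrank K (wtSpace K L h ![0, 0, 0, 0, 0, 1]) = n) (w : Fin 6 → ℤ)
      (hw : w ∈ weights₂₇ ∪ weights₂₇Dual) : finrank K (wtSpace K L h w) = n :=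
    (Finset.mem_union.mp hw).elim
      (fun hw => (finrank_wtSpace_of_mem_loweringOrbit S hw).trans h₁)
      fun hw => (finrank_wtSpace_of_mem_loweringOrbit S hw).trans h₆
  exact (finrank_wtSpace_fundamental S hL).2.imp (fun h => hconst h.1 h.2) fun h => hconst h.1 h.2

end KillingWeights

section Normalizer

variable {K L : Type*} [CommRing K] [LieRing L] [LieAlgebra K L]

theorem mem_normalizer_lieSpan {s : Set L} {x : L}
    (hx : ∀ y ∈ s, ⁅x, y⁆ ∈ LieSubalgebra.lieSpan K L s) :
    x ∈ (LieSubalgebra.lieSpan K L s).normalizer := by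
  refine (LieSubalgebra.mem_normalizer_iff _ x).mpr fun y hy => ?_
  induction hy using LieSubalgebra.lieSpan_induction with
  | mem y hy => exact hx y hy
  | zero => rw [lie_zero]; exact zero_mem _
  | add y z _ _ hy hz => rw [lie_add]; exact add_mem hy hz
  | smul c y _ hy => rw [lie_smul]; exact LieSubalgebra.smul_mem _ c hy
  | lie y z hy' hz' hy hz =>
    rw [leibniz_lie]
    exact add_mem (LieSubalgebra.lie_mem _ hy hz') (LieSubalgebra.lie_mem _ hy' hz)

theorem eq_top_of_normalizer_eq_top [LieAlgebra.IsSimple K L] {N : LieSubalgebra K L}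
    (hN : N ≠ ⊥) (htop : N.normalizer = ⊤) : N = ⊤ := by
  obtain ⟨I, rfl⟩ := (LieSubalgebra.exists_lieIdeal_coe_eq_iff K N).mpr fun x y hy =>
    (LieSubalgebra.mem_normalizer_iff N x).mp (htop ▸ LieSubalgebra.mem_top x) y hy
  rcases LieAlgebra.IsSimple.eq_bot_or_eq_top I with rfl | rfl
  · exact absurd rfl hN
  · rfl

end Normalizer

section Twentyseven

open CartanMatrix Matrix

variable {K L : Type*} [Field K] [CharZero K] [LieRing L] [LieAlgebra K L]
  [FiniteDimensional K L] {e f h : Fin 6 → L} {w : Fin 6 → ℤ}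

theorem wtSpace_le_of_mem_rootsE₆ [LieAlgebra.IsKilling K L] (S : IsSerreFamily K E₆ e f h)
    (hL : finrank K L ≤ 133) {N : LieSubalgebra K L} (he : ∀ i, e i ∈ N) (hf : ∀ i, f i ∈ N)
    (hw : w ∈ rootsE₆) : wtSpace K L h w ≤ N.toSubmodule := by
  have hcol := isRootBound_rootsE₆.col_mem 0
  have hiff {u : Fin 6 → ℤ} (hu : u ∈ rootsE₆) :=
    wtSpace_le_iff_of_mem_loweringOrbit S (N := N.toSubmodule)
      (fun i _ hm => N.lie_mem (he i) hm) (fun i _ hm => N.lie_mem (hf i) hm) hu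
  refine (hiff hw).mpr ((hiff hcol).mp fun x hx => ?_)
  have he₀ : (⟨e 0, e_mem_wtSpace S.toSerreRelations 0⟩ : wtSpace K L h (E₆.col 0)) ≠ 0 :=
    Subtype.coe_ne_coe.mp (S.isSl2Triple 0).e_ne_zero
  obtain ⟨c, hc⟩ := exists_smul_eq_of_finrank_eq_one
    (finrank_wtSpace_eq_one_of_mem_rootsE₆ S hL hcol) he₀ ⟨x, hx⟩
  rw [← show c • e 0 = x from congrArg Subtype.val hc]
  exact N.smul_mem c (he 0)

theorem normalizer_lieSpan_eq_top [LieAlgebra.IsKilling K L] (S : IsSerreFamily K E₆ e f h)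
    (hL : finrank K L ≤ 133)
    (hzero : ∀ w ∈ weights₂₇ ∪ weights₂₇Dual, finrank K (wtSpace K L h w) = 0) :
    (LieSubalgebra.lieSpan K L (Set.range e ∪ Set.range f)).normalizer = ⊤ := by
  set N := LieSubalgebra.lieSpan K L (Set.range e ∪ Set.range f)
  have hroot {w : Fin 6 → ℤ} (hw : w ∈ rootsE₆) : wtSpace K L h w ≤ N.toSubmodule :=
    wtSpace_le_of_mem_rootsE₆ S hL (fun i => LieSubalgebra.subset_lieSpan (.inl ⟨i, rfl⟩))
      (fun i => LieSubalgebra.subset_lieSpan (.inr ⟨i, rfl⟩)) hw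
  rw [← LieSubalgebra.toSubmodule_inj, LieSubalgebra.top_toSubmodule, eq_top_iff,
    ← iSup_wtSpace_eq_top S]
  refine iSup_le fun w => ?_
  by_cases hw : wtSpace K L h w = ⊥
  · exact hw ▸ bot_le
  have hsmall := mem_smallWeights_of_wtSpace_ne_bot S hL hw
  rw [smallWeights, Finset.mem_union, Finset.mem_insert] at hsmall
  rcases hsmall with (rfl | hroots) | h27
  · refine fun x hx => mem_normalizer_lieSpan ?_
    rintro _ (⟨i, rfl⟩ | ⟨i, rfl⟩)
    · refine hroot (isRootBound_rootsE₆.col_mem i) ?_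
      simpa using lie_mem_wtSpace hx (e_mem_wtSpace S.toSerreRelations i)
    · refine hroot (isRootBound_rootsE₆.neg_mem _ (isRootBound_rootsE₆.col_mem i)) ?_
      simpa using lie_mem_wtSpace hx (f_mem_wtSpace S.toSerreRelations i)
  · exact (hroot hroots).trans N.le_normalizer
  · exact absurd (Submodule.finrank_eq_zero.mp (hzero w h27)) hw

/-- If no 27-dimensional representation occurs, the Lie algebra generated by the Serre family is an
ideal, hence everything, although it is too small. -/
theorem finrank_wtSpace_eq_one_of_mem_weights₂₇ [LieAlgebra.IsSimple K L]
    (S : IsSerreFamily K E₆ e f h) (hlt : 78 < finrank K L) (hL : finrank K L ≤ 133)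
    (hw : w ∈ weights₂₇ ∪ weights₂₇Dual) : finrank K (wtSpace K L h w) = 1 := by
  refine (finrank_wtSpace_weights₂₇_eq_zero_or_eq_one S hL).resolve_left (fun hzero => ?_) w hw
  have hmem : e 0 ∈ LieSubalgebra.lieSpan K L (Set.range e ∪ Set.range f) :=
    LieSubalgebra.subset_lieSpan (.inl ⟨0, rfl⟩)
  have hne : LieSubalgebra.lieSpan K L (Set.range e ∪ Set.range f) ≠ ⊥ := fun hbot =>
    (S.isSl2Triple 0).e_ne_zero ((LieSubalgebra.mem_bot _).mp (hbot ▸ hmem))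
  have hgen : IsGeneratingSerreFamily K E₆ e f h :=
    ⟨S, eq_top_of_normalizer_eq_top hne (normalizer_lieSpan_eq_top S hL hzero)⟩
  exact (hlt.trans_le (finrank_le_of_e₆ hgen)).false

end Twentyseven

section Extension

variable {K L : Type*} [Field K] [LieRing L] [LieAlgebra K L]

theorem add_eq_zero_of_lie_lie_eq_zero {x y z : L} {a b : K} (hxy : ⁅x, y⁆ ≠ 0)
    (hz : ⁅z, ⁅x, y⁆⁆ = 0) (hx : ⁅z, x⁆ = a • x) (hy : ⁅z, y⁆ = b • y) : a + b = 0 := by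
  rw [leibniz_lie, hx, hy, smul_lie, lie_smul, ← add_smul] at hz
  exact (smul_eq_zero.mp hz).resolve_right hxy

/-- The vectors `v` and `⁅x, v⁆` form a string of length two, so `⁅x, y⁆` acts on them by `-1` and
`1`, which forces it to act on `x` by `2`. -/
theorem isSl2Triple_of_string {x y v : L} {b c : K} (hv : v ≠ 0) (hyv : ⁅y, v⁆ = 0)
    (hxyv : ⁅⁅x, y⁆, v⁆ = -v) (hxxv : ⁅x, ⁅x, v⁆⁆ = 0) (hx : ⁅⁅x, y⁆, x⁆ = b • x)
    (hy : ⁅⁅x, y⁆, y⁆ = c • y) : IsSl2Triple ⁅x, y⁆ x y := by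
  have hyx (u : L) : ⁅y, ⁅x, u⁆⁆ = ⁅x, ⁅y, u⁆⁆ - ⁅⁅x, y⁆, u⁆ := by rw [lie_lie]; abel
  have hyxv : ⁅y, ⁅x, v⁆⁆ = v := by rw [hyx, hyv, hxyv, lie_zero, zero_sub, neg_neg]
  have hxv : ⁅x, v⁆ ≠ 0 := fun h0 => hv (by rw [← hyxv, h0, lie_zero])
  have hxy : ⁅x, y⁆ ≠ 0 := fun h0 => hv (by simpa [h0] using hxyv)
  obtain rfl : b = 2 := by
    have hstring : (2 - b) • ⁅x, v⁆ = 0 := by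
      have := hyx ⁅x, v⁆
      rw [hxxv, hyxv, lie_zero, leibniz_lie, hx, hxyv, smul_lie, lie_neg] at this
      rw [this]
      module
    exact (sub_eq_zero.mp ((smul_eq_zero.mp hstring).resolve_right hxv)).symm
  obtain rfl : c = -2 := by
    linear_combination add_eq_zero_of_lie_lie_eq_zero hxy (lie_self _) hx hy
  exact ⟨hxy, rfl, by rw [hx, ofNat_smul_eq_nsmul], by rw [hy, neg_smul, ofNat_smul_eq_nsmul]⟩

variable {n : ℕ} {A : Matrix (Fin (n + 1)) (Fin (n + 1)) ℤ} {e f h : Fin n → L} {x y z : L}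

variable (K) in
/-- The relations, apart from those of `x` with itself, which `x` has to satisfy in order to extend
`e` to a solution of the Serre relations for `A`, with `z` extending `h`. The relations which the
extension of `f` has to satisfy are the same ones for the family `f`, `e`, `-h`. -/
structure IsExtension (A : Matrix (Fin (n + 1)) (Fin (n + 1)) ℤ) (e f h : Fin n → L) (x z : L) :
    Prop where
  lie_h_x (i : Fin n) : ⁅h i, x⁆ = (A i.castSucc (Fin.last n) : K) • x
  lie_z_e (i : Fin n) : ⁅z, e i⁆ = (A (Fin.last n) i.castSucc : K) • e i
  lie_f_x (i : Fin n) : ⁅f i, x⁆ = 0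
  ad_e_x (i : Fin n) : (ad K L (e i) ^ (-A i.castSucc (Fin.last n)).toNat) ⁅e i, x⁆ = 0
  ad_x_e (i : Fin n) : (ad K L x ^ (-A (Fin.last n) i.castSucc).toNat) ⁅x, e i⁆ = 0

theorem SerreRelations.lie_h_snoc
    (S : SerreRelations K (A.submatrix Fin.castSucc Fin.castSucc) e f h)
    (hx : IsExtension K A e f h x z) (hzx : ⁅z, x⁆ = (A (Fin.last n) (Fin.last n) : K) • x)
    (i j : Fin (n + 1)) :
    ⁅(Fin.snoc h z : Fin (n + 1) → L) i, (Fin.snoc e x : Fin (n + 1) → L) j⁆ =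
      (A i j : K) • (Fin.snoc e x : Fin (n + 1) → L) j := by
  refine Fin.lastCases ?_ (fun i => ?_) i <;> refine Fin.lastCases ?_ (fun j => ?_) j <;>
    simp only [Fin.snoc_last, Fin.snoc_castSucc, hzx, hx.lie_z_e, hx.lie_h_x, S.lie_h_e,
      Matrix.submatrix_apply]

theorem SerreRelations.ad_snoc_pow
    (S : SerreRelations K (A.submatrix Fin.castSucc Fin.castSucc) e f h)
    (hx : IsExtension K A e f h x z) (i j : Fin (n + 1)) :
    (ad K L ((Fin.snoc e x : Fin (n + 1) → L) i) ^ (-A i j).toNat)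
      ⁅(Fin.snoc e x : Fin (n + 1) → L) i, (Fin.snoc e x : Fin (n + 1) → L) j⁆ = 0 := by
  refine Fin.lastCases ?_ (fun i => ?_) i <;> refine Fin.lastCases ?_ (fun j => ?_) j <;>
    simp only [Fin.snoc_last, Fin.snoc_castSucc, lie_self, map_zero, hx.ad_e_x, hx.ad_x_e]
  exact S.ad_e_pow i j

theorem neg_snoc (h : Fin n → L) (z : L) :
    -(Fin.snoc h z : Fin (n + 1) → L) = Fin.snoc (-h) (-z) := by
  ext i
  refine Fin.lastCases ?_ (fun i => ?_) i <;> simp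

theorem IsSerreFamily.snoc (S : IsSerreFamily K (A.submatrix Fin.castSucc Fin.castSucc) e f h)
    (t : IsSl2Triple z x y) (hA : A (Fin.last n) (Fin.last n) = 2)
    (hx : IsExtension K A e f h x z) (hy : IsExtension K A f e (-h) y (-z)) :
    IsSerreFamily K A (Fin.snoc e x : Fin (n + 1) → L) (Fin.snoc f y) (Fin.snoc h z) where
  lie_h_h := by
    have hhz (i : Fin n) : ⁅h i, z⁆ = 0 := by
      have hhy := hy.lie_h_x i
      rw [Pi.neg_apply, neg_lie, neg_eq_iff_eq_neg] at hhy
      rw [← t.lie_e_f, leibniz_lie, hx.lie_h_x, hhy, smul_lie, lie_neg, lie_smul, add_neg_cancel]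
    refine fun i j => Fin.lastCases ?_ (fun i => ?_) i <;>
      refine Fin.lastCases ?_ (fun j => ?_) j <;>
      simp only [Fin.snoc_last, Fin.snoc_castSucc, S.lie_h_h, hhz, lie_self]
    rw [← lie_skew, hhz, neg_zero]
  lie_e_f := Fin.lastCases (by simpa using t.lie_e_f) fun i => by simpa using S.lie_e_f i
  lie_e_f_of_ne {i j} := by
    refine Fin.lastCases ?_ (fun i => ?_) i <;> refine Fin.lastCases ?_ (fun j => ?_) j <;>
      simp only [Fin.snoc_last, Fin.snoc_castSucc, ne_eq, Fin.castSucc_inj]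
    · exact fun hne => absurd trivial hne
    · exact fun _ => by rw [← lie_skew, hx.lie_f_x, neg_zero]
    · exact fun _ => hy.lie_f_x i
    · exact S.lie_e_f_of_ne
  lie_h_e := S.lie_h_snoc hx (by rw [hA, Int.cast_ofNat, t.lie_h_e_smul K])
  lie_h_f i j := by
    have hzy : ⁅-z, y⁆ = (A (Fin.last n) (Fin.last n) : K) • y := by
      rw [neg_lie, t.lie_lie_smul_f K, neg_neg, hA, Int.cast_ofNat]
    rw [← S.swap.lie_h_snoc hy hzy i j, ← neg_snoc, Pi.neg_apply, neg_lie, neg_neg]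
  ad_e_pow := S.ad_snoc_pow hx
  ad_f_pow := S.swap.ad_snoc_pow hy
  diag := Fin.lastCases hA fun i => S.diag i
  h_ne_zero := Fin.lastCases (by simpa using t.h_ne_zero) fun i => by simpa using S.h_ne_zero i

end Extension

section ExtensionE₇

open CartanMatrix Matrix

variable {K L : Type*} [Field K] [CharZero K] [LieRing L] [LieAlgebra K L]
  [FiniteDimensional K L] {e f h : Fin 6 → L} {w : Fin 6 → ℤ} {x y : L}

/-- The restriction of the last simple root of `E₇` to the Cartan subalgebra of `E₆`; it is the
lowest weight of the 27-dimensional representation with weights `weights₂₇`. -/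
def lastRootE₇ : Fin 6 → ℤ := fun i => E₇ i.castSucc (Fin.last 6)

theorem lastRootE₇_mem : lastRootE₇ ∈ weights₂₇ ∪ weights₂₇Dual := by
  decide +kernel

theorem neg_lastRootE₇_mem : -lastRootE₇ ∈ weights₂₇ ∪ weights₂₇Dual := by
  decide +kernel

theorem eq_zero_of_six_lt [LieAlgebra.IsKilling K L] (S : IsSerreFamily K E₆ e f h)
    (hL : finrank K L ≤ 133) (hw : 6 < w ⬝ᵥ gramE₆ *ᵥ w) (hx : x ∈ wtSpace K L h w) : x = 0 := by
  by_contra hx0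
  exact hw.not_ge (dotProduct_gramE₆_mulVec_le
    (mem_smallWeights_of_wtSpace_ne_bot S hL ((Submodule.ne_bot_iff _).mpr ⟨x, hx, hx0⟩)))

theorem isExtension_e₇ [LieAlgebra.IsSimple K L] (S : IsSerreFamily K E₆ e f h)
    (hlt : 78 < finrank K L) (hL : finrank K L ≤ 133) (hx : x ∈ wtSpace K L h lastRootE₇)
    (hy : y ∈ wtSpace K L h (-lastRootE₇)) (h₅ : ⁅⁅x, y⁆, e 5⁆ = -e 5) :
    IsExtension K E₇ e f h x ⁅x, y⁆ where
  lie_h_x := lie_h_eq_smul_of_finrank_eq_one S.toSerreRelations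
    (finrank_wtSpace_eq_one_of_mem_weights₂₇ S hlt hL lastRootE₇_mem) hx
  lie_z_e i := by
    have hcoeff : ∀ i : Fin 6, i ≠ 5 → E₇ (Fin.last 6) i.castSucc = 0 ∧
        6 < (lastRootE₇ + E₆.col i) ⬝ᵥ gramE₆ *ᵥ (lastRootE₇ + E₆.col i) := by decide
    have hye : ⁅y, e i⁆ = 0 := eq_zero_of_six_lt S hL (by decide +revert)
      (lie_mem_wtSpace hy (e_mem_wtSpace S.toSerreRelations i))
    rcases eq_or_ne i 5 with rfl | hi
    · rw [h₅, show E₇ (Fin.last 6) (Fin.castSucc 5) = -1 by decide]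
      simp
    · have hxe : ⁅x, e i⁆ = 0 := eq_zero_of_six_lt S hL (hcoeff i hi).2
        (lie_mem_wtSpace hx (e_mem_wtSpace S.toSerreRelations i))
      rw [lie_lie, hye, hxe, (hcoeff i hi).1]
      simp
  lie_f_x i := eq_zero_of_six_lt S hL (by decide +revert)
    (lie_mem_wtSpace (f_mem_wtSpace S.toSerreRelations i) hx)
  ad_e_x i := eq_zero_of_six_lt S hL (by decide +revert)
    (toEnd_pow_mem_wtSpace (e_mem_wtSpace S.toSerreRelations i)
      (lie_mem_wtSpace (e_mem_wtSpace S.toSerreRelations i) hx) _)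
  ad_x_e i := eq_zero_of_six_lt S hL (by decide +revert)
    (toEnd_pow_mem_wtSpace hx (lie_mem_wtSpace hx (e_mem_wtSpace S.toSerreRelations i)) _)

theorem exists_lie_lie_e_eq_neg [LieAlgebra.IsSimple K L] (S : IsSerreFamily K E₆ e f h)
    (hlt : 78 < finrank K L) (hL : finrank K L ≤ 133) :
    ∃ x ∈ wtSpace K L h lastRootE₇, ∃ y ∈ wtSpace K L h (-lastRootE₇),
      ⁅⁅x, y⁆, e 5⁆ = -e 5 := by
  have hw := finrank_wtSpace_eq_one_of_mem_weights₂₇ S hlt hL lastRootE₇_mem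
  obtain ⟨x, hx, hx0⟩ : ∃ x ∈ wtSpace K L h lastRootE₇, x ≠ 0 :=
    (Submodule.ne_bot_iff _).mp (Submodule.one_le_finrank_iff.mp hw.ge)
  obtain ⟨y, hy, hxy⟩ := exists_killingForm_ne_zero S hx hx0
  obtain ⟨a, ha⟩ := exists_lie_eq_smul_of_finrank_eq_one
    (finrank_wtSpace_eq_one_of_mem_rootsE₆ S hL (isRootBound_rootsE₆.col_mem 5))
    (by simpa using lie_mem_wtSpace hx hy) (e_mem_wtSpace S.toSerreRelations 5)
  have hyh : ⁅y, h 5⁆ = -y := by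
    rw [← lie_skew, lie_h_eq_smul_of_finrank_eq_one S.toSerreRelations
      (finrank_wtSpace_eq_one_of_mem_weights₂₇ S hlt hL neg_lastRootE₇_mem) hy 5,
      show (-lastRootE₇) 5 = 1 by decide]
    simp
  have ha0 : a ≠ 0 := by
    rintro rfl
    have hinv := LieModule.traceForm_apply_lie_apply K L L ⁅x, y⁆ (e 5) (f 5)
    rw [ha, zero_smul, map_zero, LinearMap.zero_apply, S.lie_e_f,
      LieModule.traceForm_apply_lie_apply, hyh, map_neg] at hinv
    exact hxy (neg_eq_zero.mp hinv.symm)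
  refine ⟨x, hx, -a⁻¹ • y, Submodule.smul_mem _ _ hy, ?_⟩
  rw [lie_smul, smul_lie, ha, smul_smul, neg_mul, inv_mul_cancel₀ ha0, neg_one_smul]

theorem exists_isSerreFamily_e₇ [LieAlgebra.IsSimple K L] (S : IsSerreFamily K E₆ e f h)
    (hlt : 78 < finrank K L) (hL : finrank K L ≤ 133) :
    ∃ x y z : L, IsSerreFamily K E₇ (Fin.snoc e x : Fin 7 → L) (Fin.snoc f y) (Fin.snoc h z) := by
  obtain ⟨x, hx, y, hy, he₅⟩ := exists_lie_lie_e_eq_neg S hlt hL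
  have hwx := finrank_wtSpace_eq_one_of_mem_weights₂₇ S hlt hL lastRootE₇_mem
  have hwy := finrank_wtSpace_eq_one_of_mem_weights₂₇ S hlt hL neg_lastRootE₇_mem
  have hz : ⁅x, y⁆ ∈ wtSpace K L h 0 := by simpa using lie_mem_wtSpace hx hy
  have hzh := lie_lie_h_eq_zero_of_finrank_eq_one S.toSerreRelations hwx hwy hx hy 5
  have hroot := isRootBound_rootsE₆.neg_mem _ (isRootBound_rootsE₆.col_mem 5)
  obtain ⟨a, hf₅⟩ := exists_lie_eq_smul_of_finrank_eq_one
    (finrank_wtSpace_eq_one_of_mem_rootsE₆ S hL hroot) hz (f_mem_wtSpace S.toSerreRelations 5)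
  obtain ⟨b, hzx⟩ := exists_lie_eq_smul_of_finrank_eq_one hwx hz hx
  obtain ⟨c, hzy⟩ := exists_lie_eq_smul_of_finrank_eq_one hwy hz hy
  have ha : -1 + a = 0 := by
    have hef : ⁅e 5, f 5⁆ ≠ 0 := S.lie_e_f 5 ▸ S.h_ne_zero 5
    exact add_eq_zero_of_lie_lie_eq_zero hef (by rw [S.lie_e_f, hzh])
      (by rw [he₅, neg_one_smul]) hf₅
  have hf₅' : ⁅⁅y, x⁆, f 5⁆ = -f 5 := by
    rw [← lie_skew y x, neg_lie, hf₅, ← neg_eq_of_add_eq_zero_right ha, neg_neg, one_smul]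
  have hxext := isExtension_e₇ S hlt hL hx hy he₅
  have hyext := isExtension_e₇ S.swap hlt hL
    (by rw [← neg_neg lastRootE₇, wtSpace_neg_neg]; exact hy) (by rwa [wtSpace_neg_neg]) hf₅'
  have hye : ⁅y, e 5⁆ = 0 := by rw [← lie_skew, hyext.lie_f_x, neg_zero]
  have hxxe := hxext.ad_x_e 5
  rw [show (-E₇ (Fin.last 6) (Fin.castSucc 5)).toNat = 1 by decide, pow_one] at hxxe
  exact ⟨x, y, ⁅x, y⁆, .snoc (e₆_eq_submatrix_e₇ ▸ S)
    (isSl2Triple_of_string (S.isSl2Triple 5).e_ne_zero hye he₅ hxxe hzx hzy) (by decide) hxext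
    (by rwa [lie_skew])⟩

end ExtensionE₇

section Conjugacy

open CartanMatrix Matrix
open LieAlgebra (e₆ e₇)

variable {K : Type*} [Field K] [CharZero K]

theorem isGeneratingSerreFamily_e₆ [Nontrivial (e₆ K)] :
    IsGeneratingSerreFamily K E₆ (genE K E₆) (genF K E₆) (genH K E₆) :=
  isGeneratingSerreFamily_gen E₆_diag isIndecomposable_e₆

theorem isGeneratingSerreFamily_e₇ [Nontrivial (e₇ K)] :
    IsGeneratingSerreFamily K E₇ (genE K E₇) (genF K E₇) (genH K E₇) :=
  isGeneratingSerreFamily_gen E₇_diag isIndecomposable_e₇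

theorem finiteDimensional_e₇ [Nontrivial (e₇ K)] : FiniteDimensional K (e₇ K) :=
  finiteDimensional_of_isRootBound isGeneratingSerreFamily_e₇ posDef_e₇ isRootBound_rootsE₇

theorem isSimple_e₇ [Nontrivial (e₇ K)] : LieAlgebra.IsSimple K (e₇ K) :=
  have := finiteDimensional_e₇ (K := K)
  isSimple isGeneratingSerreFamily_e₇ posDef_e₇ isIndecomposable_e₇

theorem bijective_of_isSerreFamily_e₇ {e f h : Fin 7 → e₇ K} (S : IsSerreFamily K E₇ e f h)
    {φ : e₇ K →ₗ⁅K⁆ e₇ K} (hφ : φ ∘ genE K E₇ = e) : Function.Bijective φ := by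
  have he₀ := (S.isSl2Triple 0).e_ne_zero
  have : Nontrivial (e₇ K) := ⟨e 0, 0, he₀⟩
  have := finiteDimensional_e₇ (K := K)
  have := isSimple_e₇ (K := K)
  have hker : φ.ker = ⊥ := by
    refine (LieAlgebra.IsSimple.eq_bot_or_eq_top φ.ker).resolve_right fun htop => he₀ ?_
    have hmem : genE K E₇ 0 ∈ φ.ker := htop ▸ LieSubmodule.mem_top _
    rw [← hφ]
    exact LieHom.mem_ker.mp hmem
  have hinj : Function.Injective φ := φ.ker_eq_bot.mp hker
  exact ⟨hinj, LinearMap.injective_iff_surjective (f := (φ : e₇ K →ₗ[K] e₇ K)).mp hinj⟩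

theorem exists_lieEquiv_gen_eq {e f h : Fin 6 → e₇ K} (S : IsSerreFamily K E₆ e f h) :
    ∃ φ : e₇ K ≃ₗ⁅K⁆ e₇ K, (∀ i, φ (genE K E₇ i.castSucc) = e i) ∧
      ∀ i, φ (genF K E₇ i.castSucc) = f i := by
  have : Nontrivial (e₇ K) := ⟨e 0, 0, (S.isSl2Triple 0).e_ne_zero⟩
  have := finiteDimensional_e₇ (K := K)
  have := isSimple_e₇ (K := K)
  have hlt : 78 < finrank K (e₇ K) :=
    Nat.lt_of_lt_of_le (by norm_num)
      (card_rootsE₇_le_finrank isGeneratingSerreFamily_e₇.toIsSerreFamily)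
  obtain ⟨x, y, z, T⟩ := exists_isSerreFamily_e₇ S hlt (finrank_le_of_e₇ isGeneratingSerreFamily_e₇)
  obtain ⟨φ, he, hf⟩ := T.toSerreRelations.exists_lift
  refine ⟨.ofBijective φ (bijective_of_isSerreFamily_e₇ T he), fun i => ?_, fun i => ?_⟩
  · simpa using congrFun he i.castSucc
  · simpa using congrFun hf i.castSucc

theorem exists_lieEquiv_apply_eq {e f h e' f' h' : Fin 6 → e₇ K} (S : IsSerreFamily K E₆ e f h)
    (S' : IsSerreFamily K E₆ e' f' h') :
    ∃ φ : e₇ K ≃ₗ⁅K⁆ e₇ K, (∀ i, φ (e i) = e' i) ∧ ∀ i, φ (f i) = f' i := by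
  obtain ⟨ψ, he, hf⟩ := exists_lieEquiv_gen_eq S
  obtain ⟨ψ', he', hf'⟩ := exists_lieEquiv_gen_eq S'
  refine ⟨ψ.symm.trans ψ', fun i => ?_, fun i => ?_⟩
  · rw [← he, LieEquiv.trans_apply, LieEquiv.symm_apply_apply, he']
  · rw [← hf, LieEquiv.trans_apply, LieEquiv.symm_apply_apply, hf']

end Conjugacy

end SerreEmbedding

open SerreEmbedding in
theorem stmt_18_general {K : Type*} [Field K] [CharZero K]
    (ε ε' : LieAlgebra.e₆ K →ₗ⁅K⁆ LieAlgebra.e₇ K)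
    (hε : Function.Injective ε) (hε' : Function.Injective ε') :
    ∃ φ : LieAlgebra.e₇ K ≃ₗ⁅K⁆ LieAlgebra.e₇ K, ∀ x : LieAlgebra.e₆ K, ε' x = φ (ε x) := by
  rcases subsingleton_or_nontrivial (LieAlgebra.e₆ K) with _ | _
  · exact ⟨.refl, fun x => by rw [Subsingleton.elim x 0, map_zero, map_zero, map_zero]⟩
  · have S := isGeneratingSerreFamily_e₆ (K := K)
    obtain ⟨φ, he, hf⟩ := exists_lieEquiv_apply_eq (S.map hε) (S.map hε')
    have hcomp : ε' = (φ : LieAlgebra.e₇ K →ₗ⁅K⁆ LieAlgebra.e₇ K).comp ε :=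
      hom_ext_of_lieSpan_eq_top S.lieSpan_eq_top (funext fun i => (he i).symm)
        (funext fun i => (hf i).symm)
    exact ⟨φ, LieHom.congr_fun hcomp⟩

/-- Any two injective Lie algebra homomorphisms from LieAlgebra.e₆ ℂ to LieAlgebra.e₇ ℂ are
conjugate by a Lie algebra automorphism of the codomain. -/
theorem stmt_18 (ε ε' : LieAlgebra.e₆ ℂ →ₗ⁅ℂ⁆ LieAlgebra.e₇ ℂ)
    (hε : Function.Injective ε) (hε' : Function.Injective ε') :
    ∃ φ : LieAlgebra.e₇ ℂ ≃ₗ⁅ℂ⁆ LieAlgebra.e₇ ℂ, ∀ x : LieAlgebra.e₆ ℂ, ε' x = φ (ε x) :=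
  stmt_18_general ε ε' hε hε'
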